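/- Let A be a multiplicative subgroup of Z_p^* with |A| ≪ p^{2/3}. If |A| ≪ p^{5/9} (log|A|)^{-1/18}, then |2A| ≫ |A|^{8/5} (log|A|)^{-3/10}; and if |A| ≫ p^{5/9}(log|A|)^{-1/18}, then |2A| ≫ |A| p^{1/3} (log|A|)^{-1/3}. -/

import Mathlib

open Finset Pointwise

/-- `A` is (the underlying set of) a multiplicative subgroup of `ℤ_p^*`. -/
def mulSubgroup (p : ℕ) (A : Finset (ZMod p)) : Prop :=
  (0 : ZMod p) ∉ A ∧ (1 : ZMod p) ∈ A ∧
    (∀ x ∈ A, ∀ y ∈ A, x * y ∈ A) ∧ ∀ x ∈ A, x⁻¹ ∈ A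

/-!
Write `n = |A|`, `s = |A + A|`, `l = log n`. A Stepanov polynomial, of the form
`∑ c(a,b,c) X ^ a * X ^ (n * b) * (X - 1) ^ (n * c)`, vanishes to high order at every `x` for which
`(x ^ n, (x - 1) ^ n)` lies in a few prescribed classes while having small degree, so there are few
such `x`. Applied to differences, this bounds the third moment of the representation function of
`A - A`. Applied to the ratios `(1 + b) / (1 + c)`, it bounds how many cosets carry a rich fibre;
poor fibres are handled by Cauchy–Schwarz. Together these give
`E(A) ≪ max (n ^ (4 / 3) * s ^ (2 / 3) * l ^ (1 / 2), n * s ^ 2 * l / p)`, and `n ^ 4 ≤ s * E(A)`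
turns this into a lower bound for `s`. The size `n = p ^ (5 / 9) * l ^ (-1 / 18)` is where the two
resulting bounds coincide.
-/

section Polynomial

open Polynomial

variable {F : Type*} [Field F]

theorem coeff_X_mul_derivative_sub_natCast_mul (f : F[X]) (e i : ℕ) :
    (X * derivative f - (e : F[X]) * f).coeff i = ((i : F) - e) * f.coeff i := by
  rw [coeff_sub, coeff_natCast_mul]
  cases i with
  | zero => simp
  | succ i => rw [coeff_X_mul, coeff_derivative]; push_cast; ring

theorem rootMultiplicity_lt_card_support {a : F} (ha : a ≠ 0) {f : F[X]} (hf : f ≠ 0)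
    (hinj : Set.InjOn (Nat.cast : ℕ → F) f.support) : f.rootMultiplicity a < #f.support := by
  induction h : #f.support generalizing f with
  | zero => exact absurd (card_support_eq_zero.1 h) hf
  | succ s ih =>
    obtain ⟨e, he⟩ := support_nonempty.2 hf
    set g := X * derivative f - (e : F[X]) * f with hg
    have hsupp : g.support = f.support.erase e := by
      ext i
      rw [mem_support_iff, coeff_X_mul_derivative_sub_natCast_mul, mul_ne_zero_iff, mem_erase,
        mem_support_iff, and_congr_left_iff]
      exact fun hi ↦ sub_ne_zero.trans (hinj.ne_iff (mem_support_iff.2 hi) he)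
    have hcard : #g.support = s := by rw [hsupp, card_erase_of_mem he, h, Nat.add_sub_cancel]
    by_cases hg0 : g = 0
    · obtain ⟨k, c, hc, rfl⟩ := card_support_eq_one.1 (h.trans (by rw [← hcard, hg0]; simp))
      rw [rootMultiplicity_eq_zero (by simp [hc, ha])]
      exact s.succ_pos
    · have hdvd : (X - C a) ^ (f.rootMultiplicity a - 1) ∣ g :=
        dvd_sub ((pow_sub_one_dvd_derivative_of_pow_dvd
          (pow_rootMultiplicity_dvd f a)).mul_left _)
          (((pow_dvd_pow _ (Nat.sub_le _ 1)).trans (pow_rootMultiplicity_dvd f a)).mul_left _)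
      have hlt := ih hg0 (hinj.mono (by rw [hsupp]; exact erase_subset _ _)) hcard
      have := (le_rootMultiplicity_iff hg0).2 hdvd
      omega

theorem eq_zero_of_sum_X_sub_C_pow_mul_eq_zero {a : F} (ha : a ≠ 0) {n B : ℕ} (Q : ℕ → F[X])
    (hinj : ∀ b < B, Set.InjOn (Nat.cast : ℕ → F) (Q b).support)
    (hcard : ∀ b < B, #(Q b).support ≤ n)
    (hsum : ∑ b ∈ range B, (X - C a) ^ (n * b) * Q b = 0) : ∀ b < B, Q b = 0 := by
  intro b
  induction b using Nat.strong_induction_on with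
  | _ b ih =>
    intro hb
    by_contra hQ
    have hdvd : (X - C a) ^ (n * b) * (X - C a) ^ n ∣ (X - C a) ^ (n * b) * Q b := by
      rw [← add_sum_erase _ _ (mem_range.2 hb)] at hsum
      rw [eq_neg_of_add_eq_zero_left hsum, dvd_neg, ← pow_add, ← Nat.mul_succ]
      refine dvd_sum fun c hc ↦ ?_
      obtain ⟨hcb, hcB⟩ := mem_erase.1 hc
      rcases lt_or_gt_of_ne hcb with hlt | hgt
      · simp [ih c hlt (mem_range.1 hcB)]
      · exact (pow_dvd_pow _ (Nat.mul_le_mul_left n hgt)).mul_right _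
    rw [mul_dvd_mul_iff_left (pow_ne_zero _ (X_sub_C_ne_zero a)),
      ← le_rootMultiplicity_iff hQ] at hdvd
    exact absurd (rootMultiplicity_lt_card_support ha hQ (hinj b hb))
      (hdvd.trans' (hcard b hb)).not_gt

section SumMonomial

variable {ι : Type*} [Fintype ι] (e : ι → ℕ) (w : ι → F)

theorem support_sum_monomial_subset : (∑ i, monomial (e i) (w i)).support ⊆ univ.image e := by
  intro k hk
  rw [mem_support_iff, finsetSum_coeff] at hk
  obtain ⟨i, -, hi⟩ := exists_ne_zero_of_sum_ne_zero hk
  rw [coeff_monomial, ite_ne_right_iff] at hi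
  exact mem_image.2 ⟨i, mem_univ i, hi.1⟩

theorem coeff_sum_monomial {e : ι → ℕ} (he : Function.Injective e) (i : ι) :
    (∑ j, monomial (e j) (w j)).coeff (e i) = w i := by
  classical
  simp only [finsetSum_coeff, coeff_monomial, he.eq_iff]
  simp

end SumMonomial

theorem add_mul_injective {n D B : ℕ} (hD : D ≤ n) :
    Function.Injective fun i : Fin D × Fin B ↦ (i.1 + n * i.2 : ℕ) := by
  rintro ⟨d, c⟩ ⟨d', c'⟩ h
  have hd : (d : ℕ) < n := d.2.trans_le hD
  have hd' : (d' : ℕ) < n := d'.2.trans_le hD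
  have hmod : (d : ℕ) = d' := by
    simpa [Nat.add_mul_mod_self_left, Nat.mod_eq_of_lt hd, Nat.mod_eq_of_lt hd'] using
      congrArg (· % n) h
  have hdiv : (c : ℕ) = c' := by
    refine Nat.eq_of_mul_eq_mul_left (hd.trans_le' (Nat.zero_le _)) ?_
    simpa [hmod] using h
  ext <;> assumption

theorem linearIndependent_X_pow_mul_X_sub_C_pow {p : ℕ} [CharP F p] {a : F} (ha : a ≠ 0)
    {n D B : ℕ} (hB : 0 < B) (hD : D * B ≤ n) (hp : n * B ≤ p) :
    LinearIndependent F fun i : Fin D × Fin B × Fin B ↦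
      (X : F[X]) ^ (i.1 : ℕ) * (X ^ (n * i.2.1) * (X - C a) ^ (n * i.2.2)) := by
  rw [Fintype.linearIndependent_iff]
  intro w hw
  have hDn : D ≤ n := (Nat.le_mul_of_pos_right D hB).trans hD
  let e : Fin D × Fin B → ℕ := fun i ↦ i.1 + n * i.2
  let Q : ℕ → F[X] := fun b ↦
    if hb : b < B then ∑ i, monomial (e i) (w (i.1, i.2, ⟨b, hb⟩)) else 0
  have hlt (i : Fin D × Fin B) : e i < p :=
    calc e i < n + n * i.2 := Nat.add_lt_add_right (i.1.2.trans_le hDn) _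
      _ = n * (i.2 + 1) := by ring
      _ ≤ p := (Nat.mul_le_mul_left n i.2.2).trans hp
  have hsupp : ∀ b < B, (Q b).support ⊆ univ.image e := fun b hb ↦ by
    simp only [Q, dif_pos hb]
    exact support_sum_monomial_subset _ _
  have hQ : ∀ b < B, Q b = 0 := by
    refine eq_zero_of_sum_X_sub_C_pow_mul_eq_zero ha (n := n) Q (fun b hb ↦ ?_) (fun b hb ↦ ?_) ?_
    · refine (CharP.natCast_injOn_Iio F p).mono fun k hk ↦ ?_
      obtain ⟨i, -, rfl⟩ := mem_image.1 (hsupp b hb hk)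
      exact hlt i
    · exact ((card_le_card (hsupp b hb)).trans card_image_le).trans (by simpa using hD)
    · rw [← Fin.sum_univ_eq_sum_range fun b ↦ (X - C a) ^ (n * b) * Q b, ← hw,
        ← (Equiv.prodAssoc _ _ _).sum_comp, Fintype.sum_prod_type_right]
      simp only [Q, Fin.is_lt, dif_pos, mul_sum]
      refine sum_congr rfl fun b _ ↦ sum_congr rfl fun i _ ↦ ?_
      rw [← C_mul_X_pow_eq_monomial, Equiv.prodAssoc_apply, smul_eq_C_mul, pow_add]
      ring
  rintro ⟨d, c, b⟩
  calc w (d, c, b) = (Q b).coeff (e (d, c)) := by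
        simp only [Q, dif_pos b.2]
        exact (coeff_sum_monomial (fun i ↦ w (i.1, i.2, b)) (add_mul_injective hDn) (d, c)).symm
    _ = 0 := by rw [hQ b b.2, coeff_zero]

theorem X_sub_C_pow_add_two_dvd {x : F} {m : ℕ} (hm : ((m + 1 : ℕ) : F) ≠ 0) {f : F[X]}
    (hf : (X - C x) ^ (m + 1) ∣ f) (hf' : (X - C x) ^ (m + 1) ∣ derivative f) :
    (X - C x) ^ (m + 2) ∣ f := by
  obtain ⟨g, rfl⟩ := hf
  have hdvd : (X - C x) ^ m * (X - C x) ∣ (X - C x) ^ m * (C ((m + 1 : ℕ) : F) * g) := by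
    rw [derivative_mul, derivative_X_sub_C_pow, dvd_add_left (dvd_mul_right _ _)] at hf'
    convert hf' using 1
    · rw [pow_succ]
    · rw [Nat.add_sub_cancel]; ring
  rw [mul_dvd_mul_iff_left (pow_ne_zero _ (X_sub_C_ne_zero x)), dvd_iff_isRoot, IsRoot, eval_mul,
    eval_C, mul_eq_zero_iff_left hm] at hdvd
  exact mul_dvd_mul_left _ (dvd_iff_isRoot.2 hdvd)

theorem X_sub_C_pow_dvd_of_eval_pow_smul_derivative_eq_zero {p : ℕ} [CharP F p] {q : F[X]} {x : F}
    (hq : q.eval x ≠ 0) {D : ℕ} (hD : D ≤ p) {f : F[X]}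
    (h : ∀ j < D, (((q • derivative : Module.End F F[X]) ^ j) f).eval x = 0) :
    (X - C x) ^ D ∣ f := by
  induction D generalizing f with
  | zero => simp
  | succ D ih =>
    have hf : (X - C x) ^ D ∣ f := ih (by omega) fun j hj ↦ h j (by omega)
    have hqf' : (X - C x) ^ D ∣ q * derivative f := ih (by omega) fun j hj ↦ by
      simpa [pow_succ] using h (j + 1) (by omega)
    cases D with
    | zero => simpa [dvd_iff_isRoot] using h 0 one_pos
    | succ m =>
      have hcop : IsCoprime ((X - C x) ^ (m + 1)) q := by
        refine IsCoprime.pow_left ((irreducible_X_sub_C x).coprime_iff_not_dvd.2 ?_)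
        rwa [dvd_iff_isRoot]
      refine X_sub_C_pow_add_two_dvd (fun h0 ↦ ?_) hf (hcop.dvd_of_dvd_mul_left hqf')
      exact Nat.not_dvd_of_pos_of_lt m.succ_pos hD ((CharP.cast_eq_zero_iff F p _).1 h0)

/-- The operator `X (X - a) d/dX` on polynomials, conjugated by multiplication by
`X ^ u * (X - a) ^ v`. It stays polynomial, and raises degrees by at most one. -/
noncomputable def twistedDerivation (a : F) (u v : ℕ) : Module.End F F[X] :=
  (X * (X - C a)) • derivative + LinearMap.mulLeft F ((u : F[X]) * (X - C a) + (v : F[X]) * X)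

theorem twistedDerivation_apply (a : F) (u v : ℕ) (f : F[X]) :
    twistedDerivation a u v f =
      X * (X - C a) * derivative f + ((u : F[X]) * (X - C a) + (v : F[X]) * X) * f := rfl

theorem X_sub_C_mul_derivative_X_sub_C_pow (a : F) (v : ℕ) :
    (X - C a) * derivative ((X - C a) ^ v) = (v : F[X]) * (X - C a) ^ v := by
  cases v with
  | zero => simp
  | succ v => rw [derivative_X_sub_C_pow, Nat.add_sub_cancel, C_eq_natCast]; ring

theorem X_mul_derivative_X_pow (u : ℕ) : X * derivative (X ^ u : F[X]) = (u : F[X]) * X ^ u := by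
  simpa using X_sub_C_mul_derivative_X_sub_C_pow (0 : F) u

theorem smul_derivative_mul_X_pow_mul_X_sub_C_pow (a : F) (u v : ℕ) (f : F[X]) :
    X * (X - C a) * derivative (f * (X ^ u * (X - C a) ^ v)) =
      twistedDerivation a u v f * (X ^ u * (X - C a) ^ v) := by
  rw [twistedDerivation_apply, derivative_mul, derivative_mul]
  linear_combination (f * (X - C a) ^ v * (X - C a)) * X_mul_derivative_X_pow (F := F) u +
    (f * X ^ u * X) * X_sub_C_mul_derivative_X_sub_C_pow a v

theorem smul_derivative_pow_mul_X_pow_mul_X_sub_C_pow (a : F) (u v j : ℕ) (f : F[X]) :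
    (((X * (X - C a)) • derivative : Module.End F F[X]) ^ j) (f * (X ^ u * (X - C a) ^ v)) =
      (twistedDerivation a u v ^ j) f * (X ^ u * (X - C a) ^ v) := by
  induction j with
  | zero => simp
  | succ j ih =>
    rw [pow_succ', Module.End.mul_apply, ih, pow_succ', Module.End.mul_apply,
      ← smul_derivative_mul_X_pow_mul_X_sub_C_pow]
    rfl

theorem natDegree_twistedDerivation_le (a : F) (u v : ℕ) (f : F[X]) :
    (twistedDerivation a u v f).natDegree ≤ f.natDegree + 1 := by
  rw [twistedDerivation_apply]
  refine natDegree_add_le_of_degree_le ?_ ?_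
  · rcases Nat.eq_zero_or_pos f.natDegree with h0 | h0
    · simp [derivative_of_natDegree_zero h0]
    · have hX : (X * (X - C a)).natDegree ≤ 2 := by compute_degree
      have := natDegree_derivative_lt h0.ne'
      exact natDegree_mul_le.trans (by omega)
  · have hX : ((u : F[X]) * (X - C a) + (v : F[X]) * X).natDegree ≤ 1 := by compute_degree
    exact natDegree_mul_le.trans (by omega)

theorem natDegree_twistedDerivation_pow_le (a : F) (u v j : ℕ) (f : F[X]) :
    ((twistedDerivation a u v ^ j) f).natDegree ≤ f.natDegree + j := by
  induction j with
  | zero => simp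
  | succ j ih =>
    rw [pow_succ', Module.End.mul_apply]
    exact (natDegree_twistedDerivation_le _ _ _ _).trans (Nat.add_le_add_right ih 1)

theorem exists_ne_zero_forall_sum_smul_eq_zero {ι κ : Type*} [Fintype ι] [Fintype κ] {m : ℕ}
    (f : κ → ι → F[X]) (hdeg : ∀ k i, (f k i).natDegree < m)
    (hcard : Fintype.card κ * m < Fintype.card ι) :
    ∃ w : ι → F, w ≠ 0 ∧ ∀ k, ∑ i, w i • f k i = 0 := by
  let Φ : (ι → F) →ₗ[F] (κ × Fin m → F) :=
    LinearMap.pi fun q ↦ lcoeff F q.2 ∘ₗ Fintype.linearCombination F (f q.1)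
  have hker : LinearMap.ker Φ ≠ ⊥ := LinearMap.ker_ne_bot_of_finrank_lt (by simpa using hcard)
  obtain ⟨w, hw, hw0⟩ := (Submodule.ne_bot_iff _).1 hker
  refine ⟨w, hw0, fun k ↦ ext fun d ↦ ?_⟩
  rw [coeff_zero]
  by_cases hd : d < m
  · simpa [Φ, Fintype.linearCombination_apply] using
      congrFun (LinearMap.mem_ker.1 hw) (k, ⟨d, hd⟩)
  · rw [finsetSum_coeff]
    refine sum_eq_zero fun i _ ↦ coeff_eq_zero_of_natDegree_lt ?_
    exact (natDegree_smul_le _ _).trans_lt ((hdeg k i).trans_le (not_lt.1 hd))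

theorem mul_card_le_natDegree (f : F[X]) {D : ℕ} (S : Finset F)
    (h : ∀ x ∈ S, D ≤ f.rootMultiplicity x) : D * #S ≤ f.natDegree := by
  classical
  have hle : D • S.val ≤ f.roots := Multiset.le_iff_count.2 fun x ↦ by
    rw [Multiset.count_nsmul, count_roots]
    by_cases hx : x ∈ S
    · simpa [Multiset.count_eq_one_of_mem S.nodup hx] using h x hx
    · simp [Multiset.count_eq_zero.2 hx]
  simpa using (Multiset.card_le_card hle).trans (card_roots' f)

/-- The pair of `n`-th powers attached to `x`. Stepanov's method bounds the number of `x` in a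
finite set in terms of the number of different pairs they produce. -/
def powPair (n : ℕ) (x : F) : F × F := (x ^ n, (x - 1) ^ n)

/-- The building blocks of Stepanov's auxiliary polynomials: for small `d`, the vanishing of the
derivatives of a combination of these at `x` depends on `x` and `powPair n x` only through few
linear conditions. -/
noncomputable def stepanovBlock (n d c b : ℕ) : F[X] :=
  X ^ d * (X ^ (n * c) * (X - C 1) ^ (n * b))

/-- The polynomial of degree at most `d + j` which takes the same value as the `j`-th iterate of
`X (X - 1) d/dX` on `stepanovBlock n d c b` at every point whose pair of powers is `k`. -/
noncomputable def stepanovReduction (n : ℕ) (k : F × F) (j d c b : ℕ) : F[X] :=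
  (k.1 ^ c * k.2 ^ b) • (twistedDerivation 1 (n * c) (n * b) ^ j) (X ^ d)

theorem natDegree_stepanovReduction_le (n : ℕ) (k : F × F) (j d c b : ℕ) :
    (stepanovReduction n k j d c b).natDegree ≤ d + j := by
  simpa [stepanovReduction] using (natDegree_smul_le _ _).trans
    (natDegree_twistedDerivation_pow_le (1 : F) (n * c) (n * b) j (X ^ d))

theorem eval_smul_derivative_pow_stepanovBlock (n j d c b : ℕ) (x : F) :
    ((((X * (X - C (1 : F))) • derivative : Module.End F F[X]) ^ j)
      (stepanovBlock n d c b)).eval x = (stepanovReduction n (powPair n x) j d c b).eval x := by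
  rw [stepanovBlock, smul_derivative_pow_mul_X_pow_mul_X_sub_C_pow, stepanovReduction]
  simp only [powPair, eval_smul, eval_mul, eval_pow, eval_X, eval_sub, eval_C, smul_eq_mul, pow_mul]
  ring

theorem natDegree_stepanovBlock_le (n d c b : ℕ) :
    (stepanovBlock n d c b : F[X]).natDegree ≤ d + (n * c + n * b) := by
  unfold stepanovBlock
  compute_degree

theorem add_mul_add_mul_le {n D B d c b : ℕ} (hD : D ≤ n) (hd : d < D) (hc : c < B) (hb : b < B) :
    d + (n * c + n * b) ≤ 2 * n * B := by
  have h1 : n * (c + 1) ≤ n * B := Nat.mul_le_mul_left n hc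
  have h2 : n * (b + 1) ≤ n * B := Nat.mul_le_mul_left n hb
  linarith

theorem exists_stepanov_polynomial {p : ℕ} [CharP F p] {n D B : ℕ} (hD : 0 < D)
    (hDB : D * B ≤ n) (hp : n * B ≤ p) (K : Finset (F × F)) (hK : 2 * #K * D < B ^ 2) :
    ∃ f : F[X], f ≠ 0 ∧ f.natDegree ≤ 2 * n * B ∧
      ∀ x, x ≠ 0 → x ≠ 1 → powPair n x ∈ K → D ≤ f.rootMultiplicity x := by
  have hB : 0 < B := Nat.pos_of_ne_zero fun h ↦ by simp [h] at hK
  have hDn : D ≤ n := (Nat.le_mul_of_pos_right D hB).trans hDB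
  have hDp : D ≤ p := hDn.trans ((Nat.le_mul_of_pos_right n hB).trans hp)
  let block (i : Fin D × Fin B × Fin B) : F[X] := stepanovBlock n i.1 i.2.1 i.2.2
  obtain ⟨w, hw0, hw⟩ := exists_ne_zero_forall_sum_smul_eq_zero (m := 2 * D)
    (fun (q : K × Fin D) (i : Fin D × Fin B × Fin B) ↦
      stepanovReduction n q.1.1 q.2 i.1 i.2.1 i.2.2)
    (fun q i ↦ (natDegree_stepanovReduction_le _ _ _ _ _ _).trans_lt (by omega))
    (by simp only [Fintype.card_prod, Fintype.card_coe, Fintype.card_fin]; nlinarith)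
  have hf0 : ∑ i, w i • block i ≠ 0 := fun h ↦
    hw0 (funext (Fintype.linearIndependent_iff.1
      (linearIndependent_X_pow_mul_X_sub_C_pow one_ne_zero hB hDB hp) w h))
  refine ⟨∑ i, w i • block i, hf0, ?_, fun x hx0 hx1 hxK ↦ ?_⟩
  · refine natDegree_sum_le_of_forall_le _ _ fun i _ ↦ ?_
    exact (natDegree_smul_le _ _).trans ((natDegree_stepanovBlock_le _ _ _ _).trans
      (add_mul_add_mul_le hDn i.1.2 i.2.1.2 i.2.2.2))
  · rw [le_rootMultiplicity_iff hf0]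
    refine X_sub_C_pow_dvd_of_eval_pow_smul_derivative_eq_zero (q := X * (X - C 1))
      (by simpa [sub_ne_zero] using ⟨hx0, hx1⟩) hDp fun j hj ↦ ?_
    rw [← eval_zero (x := x), ← hw (⟨_, hxK⟩, ⟨j, hj⟩), map_sum, eval_finsetSum, eval_finsetSum]
    refine sum_congr rfl fun i _ ↦ ?_
    rw [map_smul, eval_smul, eval_smul, eval_smul_derivative_pow_stepanovBlock]

end Polynomial

theorem exists_pow_three_gt_and_le {m : ℕ} (hm : 0 < m) : ∃ B : ℕ, m < B ^ 3 ∧ B ^ 3 ≤ 8 * m := by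
  have hex : ∃ B : ℕ, m < B ^ 3 := ⟨m + 1, m.lt_succ_self.trans_le (Nat.le_self_pow (by simp) _)⟩
  obtain ⟨b, hb⟩ : ∃ b, Nat.find hex = b + 1 :=
    Nat.exists_eq_succ_of_ne_zero fun h ↦ by simp at h
  have hbm : b ^ 3 ≤ m := not_lt.1 (Nat.find_min hex (hb ▸ b.lt_succ_self))
  refine ⟨b + 1, hb ▸ Nat.find_spec hex, ?_⟩
  rcases Nat.eq_zero_or_pos b with rfl | hb0
  · omega
  · calc (b + 1) ^ 3 ≤ (2 * b) ^ 3 := Nat.pow_le_pow_left (by omega) 3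
      _ = 8 * b ^ 3 := by ring
      _ ≤ 8 * m := Nat.mul_le_mul_left 8 hbm

theorem exists_stepanov_parameters {n k p : ℕ} (hk : 0 < k) (hn : 0 < n) (hle : 16 * k ≤ n ^ 2)
    (hp : 16 * k * n ^ 4 ≤ p ^ 3) :
    ∃ D B : ℕ, 0 < D ∧ D * B ≤ n ∧ n ≤ 2 * (D * B) ∧ n * B ≤ p ∧ 2 * k * D < B ^ 2 ∧
      B ^ 3 ≤ 16 * k * n := by
  obtain ⟨B, hB, hB'⟩ := exists_pow_three_gt_and_le (m := 2 * k * n) (by positivity)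
  replace hB' : B ^ 3 ≤ 16 * k * n := by linarith
  have hB0 : 0 < B := Nat.pos_of_ne_zero fun h ↦ by simp [h] at hB
  have hBn : B ≤ n := by
    refine le_of_pow_le_pow_left₀ three_ne_zero n.zero_le (hB'.trans ?_)
    calc 16 * k * n ≤ n ^ 2 * n := Nat.mul_le_mul_right n hle
      _ = n ^ 3 := by ring
  have hnB : n * B ≤ p := by
    refine le_of_pow_le_pow_left₀ three_ne_zero p.zero_le ?_
    calc (n * B) ^ 3 = n ^ 3 * B ^ 3 := by ring
      _ ≤ n ^ 3 * (16 * k * n) := Nat.mul_le_mul_left _ hB'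
      _ = 16 * k * n ^ 4 := by ring
      _ ≤ p ^ 3 := hp
  have hD : 0 < n / B := Nat.div_pos hBn hB0
  have hDB : n / B * B ≤ n := Nat.div_mul_le_self n B
  refine ⟨n / B, B, hD, hDB, ?_, hnB, ?_, hB'⟩
  · have h₁ := Nat.lt_div_mul_add (a := n) hB0
    have h₂ := Nat.le_mul_of_pos_left B hD
    omega
  · refine lt_of_mul_lt_mul_right ?_ hB0.le
    calc 2 * k * (n / B) * B = 2 * k * (n / B * B) := by ring
      _ ≤ 2 * k * n := Nat.mul_le_mul_left _ hDB
      _ < B ^ 2 * B := by linarith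

section Stepanov

variable {F : Type*} [Field F] [DecidableEq F] {p : ℕ} [CharP F p]

theorem mul_card_le_of_image_powPair {n D B : ℕ} (hD : 0 < D) (hDB : D * B ≤ n) (hp : n * B ≤ p)
    {S : Finset F} (h0 : 0 ∉ S) (h1 : 1 ∉ S) (hS : 2 * #(S.image (powPair n)) * D < B ^ 2) :
    D * #S ≤ 2 * n * B := by
  obtain ⟨f, -, hdeg, hf⟩ := exists_stepanov_polynomial hD hDB hp (S.image (powPair n)) hS
  exact (mul_card_le_natDegree f S fun x hx ↦ hf x (ne_of_mem_of_not_mem hx h0)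
    (ne_of_mem_of_not_mem hx h1) (mem_image_of_mem _ hx)).trans hdeg

theorem card_pow_three_le_of_card_image_powPair_le {n : ℕ} (hn : 0 < n) {S : Finset F}
    (h0 : 0 ∉ S) (h1 : 1 ∉ S) (hle : 16 * #(S.image (powPair n)) ≤ n ^ 2)
    (hp : 16 * #(S.image (powPair n)) * n ^ 4 ≤ p ^ 3) :
    #S ^ 3 ≤ 2 ^ 14 * (#(S.image (powPair n)) * n) ^ 2 := by
  rcases S.eq_empty_or_nonempty with rfl | hS
  · simp
  set k := #(S.image (powPair n))
  obtain ⟨D, B, hD, hDB, hnDB, hnB, hkD, hB⟩ :=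
    exists_stepanov_parameters (hS.image (powPair n)).card_pos hn hle hp
  have hS : #S ≤ 4 * B ^ 2 := by
    refine Nat.le_of_mul_le_mul_left ?_ hn
    calc n * #S ≤ 2 * (D * B) * #S := Nat.mul_le_mul_right _ hnDB
      _ = 2 * B * (D * #S) := by ring
      _ ≤ 2 * B * (2 * n * B) :=
        Nat.mul_le_mul_left _ (mul_card_le_of_image_powPair hD hDB hnB h0 h1 hkD)
      _ = n * (4 * B ^ 2) := by ring
  calc #S ^ 3 ≤ (4 * B ^ 2) ^ 3 := Nat.pow_le_pow_left hS 3
    _ = 64 * (B ^ 3) ^ 2 := by ring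
    _ ≤ 64 * (16 * k * n) ^ 2 := by gcongr
    _ = 2 ^ 14 * (k * n) ^ 2 := by ring

end Stepanov

section Layers

variable {α : Type*} (S : Finset α) (f : α → ℕ)

theorem sum_sum_Ioc_eq_sum_card_mul {n : ℕ} (hf : ∀ x ∈ S, f x ≤ n) (M : ℕ) (g : ℕ → ℝ) :
    ∑ x ∈ S, ∑ m ∈ Ioc M (f x), g m = ∑ m ∈ Ioc M n, (#{x ∈ S | m ≤ f x} : ℝ) * g m := by
  simp_rw [← nsmul_eq_mul, ← sum_const]
  refine sum_comm' fun x m ↦ ?_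
  simp only [mem_Ioc, mem_filter]
  exact ⟨fun ⟨hx, hM, hm⟩ ↦ ⟨⟨hx, hm⟩, hM, hm.trans (hf x hx)⟩,
    fun ⟨⟨hx, hm⟩, hM, _⟩ ↦ ⟨hx, hM, hm⟩⟩

theorem pow_three_le_sum_Ioc (k : ℕ) : (k : ℝ) ^ 3 ≤ ∑ m ∈ Ioc 0 k, 3 * (m : ℝ) ^ 2 := by
  induction k with
  | zero => simp
  | succ k ih =>
    rw [sum_Ioc_succ_top k.zero_le]
    push_cast
    nlinarith [(Nat.cast_nonneg k : (0 : ℝ) ≤ k)]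

theorem sq_le_sq_add_sum_Ioc {M k : ℕ} (h : M ≤ k) :
    (k : ℝ) ^ 2 ≤ (M : ℝ) ^ 2 + ∑ m ∈ Ioc M k, 2 * (m : ℝ) := by
  induction k, h using Nat.le_induction with
  | base => simp
  | succ k hk ih =>
    rw [sum_Ioc_succ_top hk]
    push_cast
    linarith

variable {S f} {n : ℕ} {B : ℝ}

theorem sum_pow_three_le_of_card_mul_pow_three_le (hf : ∀ x ∈ S, f x ≤ n)
    (hB : ∀ m ≥ 1, (#{x ∈ S | m ≤ f x} : ℝ) * (m : ℝ) ^ 3 ≤ B) :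
    ∑ x ∈ S, (f x : ℝ) ^ 3 ≤ 3 * B * (1 + Real.log n) := by
  have hB0 : 0 ≤ B := (hB 1 le_rfl).trans' (by positivity)
  have hharm : ∑ m ∈ Ioc 0 n, (m : ℝ)⁻¹ ≤ 1 + Real.log n := by
    simpa [harmonic_eq_sum_Icc, ← Icc_succ_left_eq_Ioc] using harmonic_le_one_add_log n
  calc ∑ x ∈ S, (f x : ℝ) ^ 3 ≤ ∑ x ∈ S, ∑ m ∈ Ioc 0 (f x), 3 * (m : ℝ) ^ 2 :=
        sum_le_sum fun x _ ↦ pow_three_le_sum_Ioc (f x)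
    _ = ∑ m ∈ Ioc 0 n, (#{x ∈ S | m ≤ f x} : ℝ) * (3 * (m : ℝ) ^ 2) :=
        sum_sum_Ioc_eq_sum_card_mul S f hf 0 _
    _ ≤ ∑ m ∈ Ioc 0 n, 3 * B * (m : ℝ)⁻¹ := sum_le_sum fun m hm ↦ by
        have hm1 : 1 ≤ m := (mem_Ioc.1 hm).1
        rw [← div_eq_mul_inv, le_div_iff₀ (by positivity)]
        linarith [hB m hm1]
    _ ≤ 3 * B * (1 + Real.log n) := by rw [← mul_sum]; gcongr

theorem sum_sq_le_of_card_mul_pow_three_le {M : ℕ} (hM : 1 ≤ M) (hf : ∀ x ∈ S, f x ≤ n)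
    (hB : ∀ m ≥ 1, (#{x ∈ S | m ≤ f x} : ℝ) * (m : ℝ) ^ 3 ≤ B) :
    ∑ x ∈ S with M ≤ f x, (f x : ℝ) ^ 2 ≤ 3 * B / M := by
  have hB0 : 0 ≤ B := (hB 1 le_rfl).trans' (by positivity)
  have hM0 : (0 : ℝ) < M := by exact_mod_cast hM
  have hlow : (#{x ∈ S | M ≤ f x} : ℝ) * (M : ℝ) ^ 2 ≤ B / M := by
    rw [le_div_iff₀ hM0]
    linarith [hB M hM]
  have hhigh : ∑ m ∈ Ioc M (max M n), (#{x ∈ S | m ≤ f x} : ℝ) * (2 * m) ≤ 2 * B / M :=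
    calc ∑ m ∈ Ioc M (max M n), (#{x ∈ S | m ≤ f x} : ℝ) * (2 * m)
        ≤ ∑ m ∈ Ioc M (max M n), 2 * B * ((m : ℝ) ^ 2)⁻¹ := sum_le_sum fun m hm ↦ by
          have hm1 : 1 ≤ m := hM.trans (mem_Ioc.1 hm).1.le
          rw [← div_eq_mul_inv, le_div_iff₀ (by positivity)]
          linarith [hB m hm1]
      _ ≤ 2 * B * (M : ℝ)⁻¹ := by
          rw [← mul_sum]
          have := sum_Ioc_inv_sq_le_sub (α := ℝ) (by omega : M ≠ 0) (le_max_left M n)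
          gcongr
          exact this.trans (sub_le_self _ (by positivity))
      _ = 2 * B / M := (div_eq_mul_inv _ _).symm
  calc ∑ x ∈ S with M ≤ f x, (f x : ℝ) ^ 2
      ≤ ∑ x ∈ S with M ≤ f x, ((M : ℝ) ^ 2 + ∑ m ∈ Ioc M (f x), 2 * (m : ℝ)) :=
        sum_le_sum fun x hx ↦ sq_le_sq_add_sum_Ioc (mem_filter.1 hx).2
    _ ≤ #{x ∈ S | M ≤ f x} * (M : ℝ) ^ 2 + ∑ x ∈ S, ∑ m ∈ Ioc M (f x), 2 * (m : ℝ) := by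
        rw [sum_add_distrib, sum_const, nsmul_eq_mul]
        gcongr
        exact filter_subset _ _
    _ ≤ B / M + 2 * B / M := by
        rw [sum_sum_Ioc_eq_sum_card_mul S f (fun x hx ↦ (hf x hx).trans (le_max_right M n)) M]
        exact add_le_add hlow hhigh
    _ = 3 * B / M := by ring

theorem sum_Ioc_rpow_neg_third_le (M : ℕ) :
    ∑ m ∈ Ioc 0 M, (m : ℝ) ^ (-(1 / 3) : ℝ) ≤ 3 / 2 * (M : ℝ) ^ (2 / 3 : ℝ) := by
  induction M with
  | zero => simp
  | succ M ih =>
    have hcube (k : ℕ) : ((k : ℝ) ^ (1 / 3 : ℝ)) ^ 3 = k := by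
      rw [← Real.rpow_mul_natCast k.cast_nonneg]; norm_num
    have hsq (k : ℕ) : (k : ℝ) ^ (2 / 3 : ℝ) = ((k : ℝ) ^ (1 / 3 : ℝ)) ^ 2 := by
      rw [← Real.rpow_mul_natCast k.cast_nonneg]; norm_num
    rw [sum_Ioc_succ_top M.zero_le, hsq]
    rw [hsq] at ih
    set u := (M : ℝ) ^ (1 / 3 : ℝ)
    set v := ((M + 1 : ℕ) : ℝ) ^ (1 / 3 : ℝ) with hv
    have : 0 ≤ u := by positivity
    have hv0 : 0 < v := by positivity
    have huv : v ^ 3 - u ^ 3 = 1 := by rw [hcube, hcube]; push_cast; ring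
    have hstep : v⁻¹ ≤ 3 / 2 * (v ^ 2 - u ^ 2) := by
      rw [inv_le_iff_one_le_mul₀ hv0]
      linarith [show 0 ≤ (v - u) ^ 2 * (v + 2 * u) by positivity]
    rw [Real.rpow_neg (Nat.cast_nonneg _), ← hv]
    linarith

theorem sum_sq_pow_three_le_of_card_pow_three_mul_le {M : ℕ} (hf : ∀ x ∈ S, f x ≤ M)
    (hB : ∀ m ≥ 1, (#{x ∈ S | m ≤ f x} : ℝ) ^ 3 * (m : ℝ) ^ 4 ≤ B) :
    (∑ x ∈ S, (f x : ℝ) ^ 2) ^ 3 ≤ 27 * B * (M : ℝ) ^ 2 := by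
  have hB0 : 0 ≤ B := (hB 1 le_rfl).trans' (by positivity)
  have hlayer {m : ℕ} (hm : m ∈ Ioc 0 M) :
      (#{x ∈ S | m ≤ f x} : ℝ) * (2 * m) ≤ 2 * B ^ (1 / 3 : ℝ) * (m : ℝ) ^ (-(1 / 3) : ℝ) := by
    have hm1 : 1 ≤ m := (mem_Ioc.1 hm).1
    have hm0 : (0 : ℝ) < m := by exact_mod_cast hm1
    refine le_of_pow_le_pow_left₀ three_ne_zero (by positivity) ?_
    rw [mul_pow _ (_ ^ (-(1 / 3) : ℝ)), mul_pow 2, ← Real.rpow_mul_natCast hB0,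
      ← Real.rpow_mul_natCast hm0.le]
    norm_num [Real.rpow_neg_one]
    rw [← div_eq_mul_inv, le_div_iff₀ hm0]
    linarith [hB m hm1]
  have hsum : ∑ x ∈ S, (f x : ℝ) ^ 2 ≤ 3 * B ^ (1 / 3 : ℝ) * (M : ℝ) ^ (2 / 3 : ℝ) :=
    calc ∑ x ∈ S, (f x : ℝ) ^ 2 ≤ ∑ x ∈ S, ∑ m ∈ Ioc 0 (f x), 2 * (m : ℝ) :=
          sum_le_sum fun x _ ↦ by simpa using sq_le_sq_add_sum_Ioc (f x).zero_le
      _ = ∑ m ∈ Ioc 0 M, (#{x ∈ S | m ≤ f x} : ℝ) * (2 * m) :=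
          sum_sum_Ioc_eq_sum_card_mul S f hf 0 _
      _ ≤ 2 * B ^ (1 / 3 : ℝ) * ∑ m ∈ Ioc 0 M, (m : ℝ) ^ (-(1 / 3) : ℝ) := by
          rw [mul_sum]
          exact sum_le_sum fun m hm ↦ hlayer hm
      _ ≤ 2 * B ^ (1 / 3 : ℝ) * (3 / 2 * (M : ℝ) ^ (2 / 3 : ℝ)) := by
          gcongr
          exact sum_Ioc_rpow_neg_third_le M
      _ = 3 * B ^ (1 / 3 : ℝ) * (M : ℝ) ^ (2 / 3 : ℝ) := by ring
  refine (pow_le_pow_left₀ (by positivity) hsum 3).trans_eq ?_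
  rw [mul_pow, mul_pow, ← Real.rpow_mul_natCast hB0, ← Real.rpow_mul_natCast M.cast_nonneg]
  norm_num

end Layers

section FiberwiseSup

variable {α β : Type*} [DecidableEq β]

theorem sum_le_sum_card_mul_sup_fiber (s : Finset α) (g : α → β) (f : α → ℕ) :
    ∑ a ∈ s, f a ≤ ∑ b ∈ s.image g, #{a ∈ s | g a = b} * {a ∈ s | g a = b}.sup f := by
  rw [← sum_fiberwise_of_maps_to fun a ha ↦ mem_image_of_mem g ha]
  exact sum_le_sum fun b _ ↦ sum_le_card_nsmul _ _ _ fun a ha ↦ le_sup ha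

theorem sq_sum_le_sum_card_sq_mul_sum_sup_sq (s : Finset α) (g : α → β) (f : α → ℕ) :
    (∑ a ∈ s, (f a : ℝ)) ^ 2 ≤ (∑ b ∈ s.image g, (#{a ∈ s | g a = b} : ℝ) ^ 2) *
      ∑ b ∈ s.image g, (({a ∈ s | g a = b}.sup f : ℕ) : ℝ) ^ 2 :=
  calc (∑ a ∈ s, (f a : ℝ)) ^ 2
      ≤ (∑ b ∈ s.image g, (#{a ∈ s | g a = b} : ℝ) * ({a ∈ s | g a = b}.sup f : ℕ)) ^ 2 := by
        gcongr
        exact_mod_cast sum_le_sum_card_mul_sup_fiber s g f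
    _ ≤ _ := sum_mul_sq_le_sq_mul_sq _ _ _

end FiberwiseSup

section Rich

/-- A fibre of `powPair n` with more than `richThreshold p n` points is called rich. The value is
such that a union of rich fibres stays within the range of Stepanov's method over a field of
characteristic `p`. -/
noncomputable def richThreshold (p n : ℕ) : ℝ := 81 * (1 + n ^ 2 / p)

theorem richThreshold_pos (p n : ℕ) : 0 < richThreshold p n := by
  unfold richThreshold
  positivity

theorem div_two_le_natCast_div {a b : ℕ} (hb : 0 < b) (h : b ≤ a) :
    (a : ℝ) / (2 * b) ≤ (a / b : ℕ) := by
  have h₁ : 0 < a / b := Nat.div_pos h hb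
  have h₂ : a < a / b * b + b := Nat.lt_div_mul_add hb
  have h₃ : a ≤ a / b * (2 * b) := by nlinarith
  rw [div_le_iff₀ (by positivity)]
  exact_mod_cast h₃

theorem exists_stepanov_range {n p : ℕ} (hn : 4 ≤ n) (hp : 16 * n ^ 4 ≤ p ^ 3) :
    ∃ L : ℕ, 16 * L ≤ n ^ 2 ∧ 16 * L * n ^ 4 ≤ p ^ 3 ∧
      2 ^ 14 * (n : ℝ) ^ 2 < richThreshold p n ^ 3 * L := by
  have : (0 : ℝ) < n := by positivity
  have hp0 : (0 : ℝ) < p := by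
    exact_mod_cast Nat.pos_of_ne_zero fun h ↦ by simp [h] at hp; omega
  set κ : ℝ := 1 + n ^ 2 / p
  have hκ1 : 1 ≤ κ := by simp only [κ]; linarith [show (0 : ℝ) ≤ n ^ 2 / p by positivity]
  have hlow : (n : ℝ) ^ 2 ≤ 32 * κ ^ 3 * (min (n ^ 2 / 16) (p ^ 3 / (16 * n ^ 4)) : ℕ) := by
    rw [Nat.cast_min, mul_min_of_nonneg _ _ (by positivity), le_min_iff]
    constructor
    · have := div_two_le_natCast_div (a := n ^ 2) (b := 16) (by simp) (by nlinarith)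
      push_cast at this
      nlinarith [one_le_pow₀ hκ1 (n := 3)]
    · have := div_two_le_natCast_div (by positivity) hp
      push_cast at this
      have hκ : ((n : ℝ) ^ 2 / p) ^ 3 ≤ κ ^ 3 := by gcongr; simp [κ]
      calc (n : ℝ) ^ 2 = 32 * (n ^ 2 / p) ^ 3 * (p ^ 3 / (2 * (16 * n ^ 4))) := by
            field_simp; norm_num
        _ ≤ _ := by gcongr
  refine ⟨min (n ^ 2 / 16) (p ^ 3 / (16 * n ^ 4)), ?_, ?_, ?_⟩
  · exact (Nat.mul_le_mul_left _ (min_le_left _ _)).trans (Nat.mul_div_le _ _)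
  · rw [mul_right_comm]
    exact (Nat.mul_le_mul_left _ (min_le_right _ _)).trans (Nat.mul_div_le _ _)
  · rw [richThreshold]
    nlinarith [show 0 < (n : ℝ) ^ 2 by positivity]

variable {F : Type*} [Field F] [DecidableEq F] {p : ℕ} [CharP F p] {n : ℕ} {S : Finset F}

theorem card_pow_three_le_of_rich (hn : 4 ≤ n) (hp : 16 * n ^ 4 ≤ p ^ 3) (h0 : 0 ∉ S)
    (h1 : 1 ∉ S) (hS : ∀ k ∈ S.image (powPair n), richThreshold p n < #{x ∈ S | powPair n x = k})
    {T : Finset F} (hT : T ⊆ S) : #T ^ 3 ≤ 2 ^ 14 * (#(T.image (powPair n)) * n) ^ 2 := by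
  obtain ⟨L, hLn, hLp, hL⟩ := exists_stepanov_range hn hp
  have hstep {U : Finset F} (hU : U ⊆ S) (hUL : #(U.image (powPair n)) ≤ L) :
      #U ^ 3 ≤ 2 ^ 14 * (#(U.image (powPair n)) * n) ^ 2 :=
    card_pow_three_le_of_card_image_powPair_le (p := p) (by omega) (fun h ↦ h0 (hU h))
      (fun h ↦ h1 (hU h)) ((Nat.mul_le_mul_left _ hUL).trans hLn)
      (hLp.trans' (by gcongr))
  refine hstep hT (not_lt.1 fun hlt ↦ ?_)
  obtain ⟨K, hKT, hK⟩ := exists_subset_card_eq hlt.le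
  have hKS : K ⊆ S.image (powPair n) := hKT.trans (image_subset_image hT)
  set U := {x ∈ S | powPair n x ∈ K}
  have hUK : U.image (powPair n) = K := by
    have := filter_image (s := S) (f := powPair n) (p := (· ∈ K))
    rwa [filter_mem_eq_inter, inter_eq_right.2 hKS, eq_comm] at this
  have hcard : L * richThreshold p n ≤ #U := by
    rw [card_eq_sum_card_image (powPair n) U, hUK, ← hK, ← nsmul_eq_mul, Nat.cast_sum]
    refine card_nsmul_le_sum _ _ _ fun k hk ↦ (hS k (hKS hk)).le.trans ?_
    refine Nat.cast_le.2 (card_le_card fun x hx ↦ ?_)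
    obtain ⟨hxS, rfl⟩ := mem_filter.1 hx
    exact mem_filter.2 ⟨mem_filter.2 ⟨hxS, hk⟩, rfl⟩
  have hU : (#U : ℝ) ^ 3 ≤ 2 ^ 14 * (L * n) ^ 2 := by
    exact_mod_cast hK ▸ hUK ▸ hstep (filter_subset _ _) (by rw [hUK, hK])
  have hL0 : (0 : ℝ) < L := by
    refine lt_of_le_of_ne L.cast_nonneg fun h ↦ ?_
    rw [← h] at hL
    linarith [show 0 ≤ 2 ^ 14 * (n : ℝ) ^ 2 by positivity]
  have := calc L ^ 2 * (richThreshold p n ^ 3 * L) = (L * richThreshold p n) ^ 3 := by ring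
    _ ≤ (#U : ℝ) ^ 3 := by gcongr; exact mul_nonneg L.cast_nonneg (richThreshold_pos p n).le
    _ ≤ 2 ^ 14 * (L * n) ^ 2 := hU
    _ = L ^ 2 * (2 ^ 14 * n ^ 2) := by ring
  exact hL.not_ge (le_of_mul_le_mul_left this (by positivity))

theorem card_mul_pow_three_le_of_rich (hn : 4 ≤ n) (hp : 16 * n ^ 4 ≤ p ^ 3) (h0 : 0 ∉ S)
    (h1 : 1 ∉ S) (hS : ∀ k ∈ S.image (powPair n), richThreshold p n < #{x ∈ S | powPair n x = k})
    (m : ℕ) :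
    #{k ∈ S.image (powPair n) | m ≤ #{x ∈ S | powPair n x = k}} * m ^ 3 ≤ 2 ^ 14 * n ^ 2 := by
  set K := {k ∈ S.image (powPair n) | m ≤ #{x ∈ S | powPair n x = k}}
  rcases K.eq_empty_or_nonempty with hK | hK
  · simp [hK]
  set T := {x ∈ S | m ≤ #{y ∈ S | powPair n y = powPair n x}}
  have hTK : T.image (powPair n) = K :=
    (filter_image (s := S) (p := fun k ↦ m ≤ #{x ∈ S | powPair n x = k})).symm
  have hKT : #K * m ≤ #T := by
    rw [card_eq_sum_card_image (powPair n) T, hTK, ← smul_eq_mul]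
    refine card_nsmul_le_sum _ _ _ fun k hk ↦ (mem_filter.1 hk).2.trans (card_le_card fun x hx ↦ ?_)
    obtain ⟨hxS, rfl⟩ := mem_filter.1 hx
    exact mem_filter.2 ⟨mem_filter.2 ⟨hxS, (mem_filter.1 hk).2⟩, rfl⟩
  refine Nat.le_of_mul_le_mul_left ?_ (pow_pos hK.card_pos 2)
  calc #K ^ 2 * (#K * m ^ 3) = (#K * m) ^ 3 := by ring
    _ ≤ #T ^ 3 := Nat.pow_le_pow_left hKT 3
    _ ≤ 2 ^ 14 * (#K * n) ^ 2 :=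
      hTK ▸ card_pow_three_le_of_rich hn hp h0 h1 hS (filter_subset _ _)
    _ = #K ^ 2 * (2 ^ 14 * n ^ 2) := by ring

theorem card_filter_pow_eq_le (hn : 0 < n) (S : Finset F) (a : F) : #{x ∈ S | x ^ n = a} ≤ n := by
  refine (card_le_card fun x hx ↦ ?_).trans
    ((Multiset.toFinset_card_le _).trans (Polynomial.card_nthRoots n a))
  simpa [Polynomial.mem_nthRoots hn] using (mem_filter.1 hx).2

theorem sum_card_pow_three_le_of_rich (hn : 4 ≤ n) (hp : 16 * n ^ 4 ≤ p ^ 3) (h0 : 0 ∉ S)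
    (h1 : 1 ∉ S)
    (hS : ∀ k ∈ S.image (powPair n), richThreshold p n < #{x ∈ S | powPair n x = k}) :
    ∑ k ∈ S.image (powPair n), (#{x ∈ S | powPair n x = k} : ℝ) ^ 3 ≤
      3 * (2 ^ 14 * n ^ 2) * (1 + Real.log n) := by
  refine sum_pow_three_le_of_card_mul_pow_three_le (fun k _ ↦ ?_) fun m _ ↦ ?_
  · refine (card_le_card fun x hx ↦ ?_).trans (card_filter_pow_eq_le (by omega) S k.1)
    simp_all [powPair, Prod.ext_iff]
  · exact_mod_cast card_mul_pow_three_le_of_rich hn hp h0 h1 hS m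

end Rich

section DiffCount

variable {G : Type*} [AddCommGroup G] [DecidableEq G]

/-- The number of representations of `x` as a difference of two elements of `A`, each of them
recorded by its subtrahend. -/
def diffCount (A : Finset G) (x : G) : ℕ := #{v ∈ A | x + v ∈ A}

variable (A : Finset G)

theorem diffCount_le_card (x : G) : diffCount A x ≤ #A := card_filter_le _ _

theorem diffCount_pow_three_le (θ : ℝ) (x : G) :
    (diffCount A x : ℝ) ^ 3 ≤ θ ^ 2 * diffCount A x +
      (if x = 0 then (#A : ℝ) ^ 3 else 0) +
        if x ≠ 0 ∧ θ < diffCount A x then (diffCount A x : ℝ) ^ 3 else 0 := by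
  have : (0 : ℝ) ≤ diffCount A x := Nat.cast_nonneg _
  by_cases hx : x = 0
  · have : (diffCount A x : ℝ) ^ 3 ≤ #A ^ 3 := by gcongr; exact diffCount_le_card A x
    simp only [hx, ne_eq, not_true_eq_false, false_and, if_true, if_false] at this ⊢
    linarith [show 0 ≤ θ ^ 2 * diffCount A (0 : G) by positivity]
  · by_cases hθ : θ < diffCount A x
    · simp only [hx, hθ, ne_eq, not_false_eq_true, and_self, if_true, if_false]
      linarith [show 0 ≤ θ ^ 2 * diffCount A x by positivity]
    · have : (diffCount A x : ℝ) ^ 2 ≤ θ ^ 2 := by gcongr; exact not_lt.1 hθ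
      simp only [hx, hθ, and_false, if_false, add_zero]
      calc (diffCount A x : ℝ) ^ 3 = diffCount A x ^ 2 * diffCount A x := by ring
        _ ≤ _ := by gcongr

theorem diffCount_eq_card_filter_sub (x : G) :
    diffCount A x = #{q ∈ A ×ˢ A | q.1 - q.2 = x} := by
  simp_rw [diffCount, card_filter, sum_product_right, sub_eq_iff_eq_add, sum_ite_eq']

theorem sum_product_sub_eq_sum_diffCount_smul {M : Type*} [AddCommMonoid M] (g : G → M) :
    ∑ q ∈ A ×ˢ A, g (q.1 - q.2) = ∑ x ∈ A - A, diffCount A x • g x := by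
  simp_rw [diffCount_eq_card_filter_sub]
  rw [← sum_fiberwise_of_maps_to (t := A - A) (g := fun q : G × G ↦ q.1 - q.2)
    fun q hq ↦ sub_mem_sub (mem_product.1 hq).1 (mem_product.1 hq).2]
  refine sum_congr rfl fun x _ ↦ ?_
  rw [← sum_const]
  exact sum_congr rfl fun q hq ↦ by rw [(mem_filter.1 hq).2]

theorem addEnergy_eq_sum_product_diffCount :
    addEnergy A A = ∑ q ∈ A ×ˢ A, diffCount A (q.1 - q.2) := by
  have hadd (a b v w : G) : a + v = b + w ↔ w = a - b + v := by
    rw [eq_comm, ← eq_sub_iff_add_eq', sub_add_eq_add_sub]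
  simp_rw [addEnergy, diffCount, card_filter, sum_product, hadd, sum_ite_eq']

theorem addEnergy_le_card_pow_three : addEnergy A A ≤ #A ^ 3 := by
  rw [addEnergy_eq_sum_product_diffCount]
  refine (sum_le_card_nsmul _ _ _ fun q _ ↦ diffCount_le_card A _).trans_eq ?_
  rw [card_product, smul_eq_mul]
  ring

theorem addEnergy_eq_sum_diffCount_sq :
    addEnergy A A = ∑ x ∈ A - A, diffCount A x ^ 2 := by
  simp_rw [addEnergy_eq_sum_product_diffCount, sum_product_sub_eq_sum_diffCount_smul, smul_eq_mul,
    sq]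

theorem sum_diffCount_sq_le_addEnergy (D : Finset G) :
    ∑ x ∈ D, diffCount A x ^ 2 ≤ addEnergy A A := by
  rw [addEnergy_eq_sum_diffCount_sq]
  refine sum_le_sum_of_ne_zero fun x _ hx ↦ ?_
  obtain ⟨v, hv⟩ := card_ne_zero.1 (ne_zero_pow two_ne_zero hx)
  obtain ⟨hv, hxv⟩ := mem_filter.1 hv
  exact add_sub_cancel_right x v ▸ sub_mem_sub hxv hv

theorem sum_diffCount : ∑ x ∈ A - A, diffCount A x = #A ^ 2 := by
  simpa [sq] using (sum_product_sub_eq_sum_diffCount_smul A fun _ ↦ (1 : ℕ)).symm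

theorem sum_card_filter_sub_mem_sq_le (Q : Finset (G × G)) :
    ∑ q ∈ Q, #{a ∈ A | q.1 - a ∈ A ∧ q.2 - a ∈ A} ^ 2 ≤ ∑ x ∈ A - A, diffCount A x ^ 3 := by
  let R (q u : G × G) : Prop := (q.1 - u.1 ∈ A ∧ q.2 - u.1 ∈ A) ∧ q.1 - u.2 ∈ A ∧ q.2 - u.2 ∈ A
  calc ∑ q ∈ Q, #{a ∈ A | q.1 - a ∈ A ∧ q.2 - a ∈ A} ^ 2
      = ∑ q ∈ Q, #{u ∈ A ×ˢ A | R q u} := sum_congr rfl fun q _ ↦ by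
        rw [sq, ← card_product, ← filter_product]
    _ = ∑ u ∈ A ×ˢ A, #{q ∈ Q | R q u} := sum_card_bipartiteAbove_eq_sum_card_bipartiteBelow R
    _ ≤ ∑ u ∈ A ×ˢ A, diffCount A (u.1 - u.2) ^ 2 := sum_le_sum fun u _ ↦ by
        rw [sq, diffCount, ← card_product]
        refine card_le_card_of_injOn (fun q ↦ (q.1 - u.1, q.2 - u.1)) (fun q hq ↦ ?_) ?_
        · simp_all [R]
        · intro q _ q' _ h
          simp_all [Prod.ext_iff]
    _ = ∑ x ∈ A - A, diffCount A x ^ 3 := by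
        rw [sum_product_sub_eq_sum_diffCount_smul A fun x ↦ diffCount A x ^ 2]
        simp_rw [smul_eq_mul, ← pow_succ']

end DiffCount

section MulSubgroup

variable {F : Type*} [Field F]

/-- `A` is the underlying set of a finite subgroup of the multiplicative group of a field. -/
structure IsMulSubgroup (A : Finset F) : Prop where
  zero_notMem : 0 ∉ A
  one_mem : 1 ∈ A
  mul_mem : ∀ x ∈ A, ∀ y ∈ A, x * y ∈ A
  inv_mem : ∀ x ∈ A, x⁻¹ ∈ A

namespace IsMulSubgroup

variable {A : Finset F}

theorem ne_zero (hA : IsMulSubgroup A) {a : F} (ha : a ∈ A) : a ≠ 0 :=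
  ne_of_mem_of_not_mem ha hA.zero_notMem

theorem card_pos (hA : IsMulSubgroup A) : 0 < #A := Finset.card_pos.2 ⟨1, hA.one_mem⟩

theorem mul_mem_iff (hA : IsMulSubgroup A) {a x : F} (ha : a ∈ A) : a * x ∈ A ↔ x ∈ A :=
  ⟨fun h ↦ by simpa [hA.ne_zero ha] using hA.mul_mem _ (hA.inv_mem a ha) _ h, hA.mul_mem a ha x⟩

theorem pow_card_eq_one (hA : IsMulSubgroup A) {a : F} (ha : a ∈ A) : a ^ #A = 1 := by
  have ha0 := hA.ne_zero ha
  have hprod : ∏ x ∈ A, a * x = ∏ x ∈ A, x :=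
    prod_nbij' (a * ·) (a⁻¹ * ·) (fun x ↦ hA.mul_mem a ha x)
      (fun x ↦ hA.mul_mem _ (hA.inv_mem a ha) x) (by simp [ha0]) (by simp [ha0]) (fun _ _ ↦ rfl)
  rw [prod_mul_distrib, prod_const] at hprod
  exact (mul_eq_right₀ (prod_ne_zero_iff.2 fun x ↦ hA.ne_zero)).1 hprod

theorem pow_two_mul_card_eq_one (hA : IsMulSubgroup A) {a : F} (ha : a ∈ A) :
    a ^ (2 * #A) = 1 := by
  rw [mul_comm, pow_mul, hA.pow_card_eq_one ha, one_pow]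

theorem powPair_one_add_div (hA : IsMulSubgroup A) {x v : F} (hx : x ≠ 0) (hv : v ∈ A)
    (hxv : x + v ∈ A) :
    powPair (2 * #A) (1 + v / x) = ((x ^ (2 * #A))⁻¹, (x ^ (2 * #A))⁻¹) := by
  rw [powPair, add_sub_cancel_left, one_add_div hx, div_pow, div_pow,
    hA.pow_two_mul_card_eq_one hv, hA.pow_two_mul_card_eq_one hxv, one_div]

variable [DecidableEq F]

theorem diffCount_mul (hA : IsMulSubgroup A) {a : F} (ha : a ∈ A) (x : F) :
    diffCount A (a * x) = diffCount A x := by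
  have hle {b : F} (hb : b ∈ A) (y : F) : diffCount A y ≤ diffCount A (b * y) :=
    card_le_card_of_injOn (b * ·)
      (fun v hv ↦ by simpa [← mul_add, hA.mul_mem_iff hb] using hv)
      (mul_right_injective₀ (hA.ne_zero hb)).injOn
  exact le_antisymm (by simpa [hA.ne_zero ha] using hle (hA.inv_mem a ha) (a * x)) (hle ha x)

theorem card_mul_card_image_pow_le (hA : IsMulSubgroup A) {X : Finset F} (h0 : 0 ∉ X)
    (hX : ∀ a ∈ A, ∀ x ∈ X, a * x ∈ X) : #A * #(X.image (· ^ (2 * #A))) ≤ #X := by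
  rw [card_eq_sum_card_image (· ^ (2 * #A)) X, mul_comm, ← smul_eq_mul]
  refine card_nsmul_le_sum _ _ _ fun y hy ↦ ?_
  obtain ⟨x, hx, rfl⟩ := mem_image.1 hy
  refine card_le_card_of_injOn (· * x) (fun a ha ↦ ?_)
    (mul_left_injective₀ (ne_of_mem_of_not_mem hx h0)).injOn
  simpa [mul_pow, hA.pow_two_mul_card_eq_one ha] using hX a ha x hx

end IsMulSubgroup

variable [DecidableEq F]

/-- The nonzero differences of `A` with so many representations that Stepanov's method applies to
the corresponding fibres of `powPair (2 * #A)`. The `2 * #A`-th powers of the elements of `A` and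
of `-1` are all `1`. -/
noncomputable def richDiffs (p : ℕ) (A : Finset F) : Finset F :=
  {x ∈ A - A | x ≠ 0 ∧ richThreshold p (2 * #A) < diffCount A x}

/-- The quotients `(x + v) / x` with `x` a rich difference and `v`, `x + v` in `A`: those with a
given `x` lie in one fibre of `powPair (2 * #A)`. -/
noncomputable def richDiffQuotients (p : ℕ) (A : Finset F) : Finset F :=
  {q ∈ richDiffs p A ×ˢ A | q.1 + q.2 ∈ A}.image fun q ↦ 1 + q.2 / q.1

variable {p : ℕ} {A : Finset F}

theorem ne_zero_of_mem_richDiffs {x : F} (hx : x ∈ richDiffs p A) : x ≠ 0 :=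
  (mem_filter.1 hx).2.1

theorem richThreshold_lt_of_mem_richDiffs {x : F} (hx : x ∈ richDiffs p A) :
    richThreshold p (2 * #A) < diffCount A x :=
  (mem_filter.1 hx).2.2

theorem mem_richDiffQuotients {w : F} :
    w ∈ richDiffQuotients p A ↔ ∃ x ∈ richDiffs p A, ∃ v ∈ A, x + v ∈ A ∧ 1 + v / x = w := by
  simp only [richDiffQuotients, mem_image, mem_filter, mem_product, Prod.exists]
  grind

namespace IsMulSubgroup

theorem zero_notMem_richDiffQuotients (hA : IsMulSubgroup A) : 0 ∉ richDiffQuotients p A := by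
  intro h
  obtain ⟨x, hx, v, -, hxv, h⟩ := mem_richDiffQuotients.1 h
  rw [one_add_div (ne_zero_of_mem_richDiffs hx), div_eq_zero_iff] at h
  exact h.elim (hA.ne_zero hxv) (ne_zero_of_mem_richDiffs hx)

theorem one_notMem_richDiffQuotients (hA : IsMulSubgroup A) : 1 ∉ richDiffQuotients p A := by
  intro h
  obtain ⟨x, hx, v, hv, -, h⟩ := mem_richDiffQuotients.1 h
  simp [hA.ne_zero hv, ne_zero_of_mem_richDiffs hx] at h

theorem diffCount_le_card_filter_richDiffQuotients (hA : IsMulSubgroup A) {x : F}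
    (hx : x ∈ richDiffs p A) :
    diffCount A x ≤ #{w ∈ richDiffQuotients p A |
      powPair (2 * #A) w = ((x ^ (2 * #A))⁻¹, (x ^ (2 * #A))⁻¹)} := by
  have hx0 := ne_zero_of_mem_richDiffs hx
  refine card_le_card_of_injOn (fun v ↦ 1 + v / x) (fun v hv ↦ ?_) fun v _ v' _ h ↦ ?_
  · obtain ⟨hv, hxv⟩ := mem_filter.1 hv
    exact mem_filter.2
      ⟨mem_richDiffQuotients.2 ⟨x, hx, v, hv, hxv, rfl⟩, hA.powPair_one_add_div hx0 hv hxv⟩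
  · exact (div_left_inj' hx0).1 (add_left_cancel h)

theorem card_filter_richDiffs_mul_pow_three_le [CharP F p] (hA : IsMulSubgroup A) (hn : 2 ≤ #A)
    (hp : 16 * (2 * #A) ^ 4 ≤ p ^ 3) (m : ℕ) :
    #{x ∈ richDiffs p A | m ≤ diffCount A x} * m ^ 3 ≤ 2 ^ 17 * #A ^ 3 := by
  set N := 2 * #A with hN
  set S := richDiffQuotients p A
  have hS : ∀ k ∈ S.image (powPair N), richThreshold p N < #{w ∈ S | powPair N w = k} := by
    intro k hk
    obtain ⟨w, hw, rfl⟩ := mem_image.1 hk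
    obtain ⟨x, hx, v, hv, hxv, rfl⟩ := mem_richDiffQuotients.1 hw
    rw [hA.powPair_one_add_div (ne_zero_of_mem_richDiffs hx) hv hxv]
    exact (richThreshold_lt_of_mem_richDiffs hx).trans_le
      (Nat.cast_le.2 (hA.diffCount_le_card_filter_richDiffQuotients hx))
  set K := {k ∈ S.image (powPair N) | m ≤ #{w ∈ S | powPair N w = k}}
  have hcard : #{x ∈ richDiffs p A | m ≤ diffCount A x} ≤ N * #K := by
    refine card_le_mul_card_image_of_maps_to (f := fun x ↦ ((x ^ N)⁻¹, (x ^ N)⁻¹))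
      (fun x hx ↦ ?_) N fun k _ ↦ ?_
    · obtain ⟨hx, hm⟩ := mem_filter.1 hx
      have hle := hA.diffCount_le_card_filter_richDiffQuotients hx
      have hpos : 0 < diffCount A x := by
        exact_mod_cast (richThreshold_pos p N).trans (richThreshold_lt_of_mem_richDiffs hx)
      obtain ⟨w, hw⟩ := Finset.card_pos.1 (hpos.trans_le hle)
      exact mem_filter.2 ⟨mem_image.2 ⟨w, mem_filter.1 hw⟩, hm.trans hle⟩
    · refine (card_le_card fun x hx ↦ ?_).trans
        (card_filter_pow_eq_le (by omega) (richDiffs p A) k.1⁻¹)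
      simp only [mem_filter] at hx ⊢
      exact ⟨hx.1.1, by simp [← hx.2]⟩
  calc #{x ∈ richDiffs p A | m ≤ diffCount A x} * m ^ 3 ≤ N * #K * m ^ 3 := by gcongr
    _ = N * (#K * m ^ 3) := by ring
    _ ≤ N * (2 ^ 14 * N ^ 2) :=
      Nat.mul_le_mul_left _ (card_mul_pow_three_le_of_rich (by omega) hp
        hA.zero_notMem_richDiffQuotients hA.one_notMem_richDiffQuotients hS m)
    _ = 2 ^ 17 * #A ^ 3 := by rw [hN]; ring

theorem sum_diffCount_pow_three_le [CharP F p] (hA : IsMulSubgroup A) (hn : 2 ≤ #A)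
    (hp : 16 * (2 * #A) ^ 4 ≤ p ^ 3) :
    ∑ x ∈ A - A, (diffCount A x : ℝ) ^ 3 ≤
      (richThreshold p (2 * #A) * #A) ^ 2 + 2 ^ 19 * #A ^ 3 * (1 + Real.log #A) := by
  set θ := richThreshold p (2 * #A)
  have hlog : 0 ≤ Real.log #A := Real.log_natCast_nonneg _
  have hrich : ∑ x ∈ richDiffs p A, (diffCount A x : ℝ) ^ 3 ≤
      3 * (2 ^ 17 * #A ^ 3) * (1 + Real.log #A) :=
    sum_pow_three_le_of_card_mul_pow_three_le (fun x _ ↦ diffCount_le_card A x) fun m _ ↦ by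
      exact_mod_cast hA.card_filter_richDiffs_mul_pow_three_le hn hp m
  have hsum : ∑ x ∈ A - A, (diffCount A x : ℝ) = #A ^ 2 := by exact_mod_cast sum_diffCount A
  have h0 : 0 ∈ A - A := mem_sub.2 ⟨1, hA.one_mem, 1, hA.one_mem, sub_self 1⟩
  calc ∑ x ∈ A - A, (diffCount A x : ℝ) ^ 3
      ≤ _ := sum_le_sum fun x _ ↦ diffCount_pow_three_le A θ x
    _ = θ ^ 2 * #A ^ 2 + #A ^ 3 + ∑ x ∈ richDiffs p A, (diffCount A x : ℝ) ^ 3 := by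
      rw [sum_add_distrib, sum_add_distrib, ← mul_sum, hsum, sum_ite_eq_of_mem' _ _ _ h0,
        ← sum_filter, richDiffs]
    _ ≤ (θ * #A) ^ 2 + 2 ^ 19 * #A ^ 3 * (1 + Real.log #A) := by
      rw [mul_pow]
      nlinarith [show (0 : ℝ) ≤ #A ^ 3 by positivity]

theorem sum_diffCount_sq_le [CharP F p] (hA : IsMulSubgroup A) (hn : 2 ≤ #A)
    (hp : 16 * (2 * #A) ^ 4 ≤ p ^ 3) {M : ℕ} (hM : richThreshold p (2 * #A) < M) :
    ∑ x ∈ A - A with x ≠ 0 ∧ M ≤ diffCount A x, (diffCount A x : ℝ) ^ 2 ≤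
      2 ^ 19 * #A ^ 3 / M := by
  have hM0 : (0 : ℝ) < M := (richThreshold_pos p (2 * #A)).trans hM
  calc ∑ x ∈ A - A with x ≠ 0 ∧ M ≤ diffCount A x, (diffCount A x : ℝ) ^ 2
      ≤ ∑ x ∈ richDiffs p A with M ≤ diffCount A x, (diffCount A x : ℝ) ^ 2 := by
        refine sum_le_sum_of_subset_of_nonneg (fun x hx ↦ ?_) fun _ _ _ ↦ by positivity
        obtain ⟨hx, hx0, hMx⟩ := mem_filter.1 hx
        exact mem_filter.2 ⟨mem_filter.2 ⟨hx, hx0, hM.trans_le (Nat.cast_le.2 hMx)⟩, hMx⟩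
    _ ≤ 3 * (2 ^ 17 * #A ^ 3) / M :=
        sum_sq_le_of_card_mul_pow_three_le (by exact_mod_cast hM0)
          (fun x _ ↦ diffCount_le_card A x) fun m _ ↦ by
            exact_mod_cast hA.card_filter_richDiffs_mul_pow_three_le hn hp m
    _ ≤ 2 ^ 19 * #A ^ 3 / M :=
        div_le_div_of_nonneg_right (by linarith [show (0 : ℝ) ≤ #A ^ 3 by positivity]) hM0.le

end IsMulSubgroup

end MulSubgroup

section SumRatios

variable {F : Type*} [Field F]

theorem powPair_div {y z : F} (hz : z ≠ 0) (n : ℕ) :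
    powPair n (y / z) = (y ^ n / z ^ n, (y - z) ^ n / z ^ n) := by
  rw [powPair, div_sub_one hz, div_pow, div_pow]

theorem injOn_div_of_sub_eq {x : F} (hx : x ≠ 0) :
    Set.InjOn (fun q : F × F ↦ q.1 / q.2) {q | q.2 ≠ 0 ∧ q.1 - q.2 = x} := by
  rintro ⟨y, z⟩ ⟨hz, hyz⟩ ⟨y', z'⟩ ⟨hz', hyz'⟩ h
  have hxz : x / z = x / z' := by
    rw [← hyz, ← div_sub_one hz, hyz, ← hyz', ← div_sub_one hz']
    exact congrArg (· - 1) h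
  obtain rfl : z' = z := by rwa [div_eq_div_iff hz hz', mul_right_inj' hx] at hxz
  exact Prod.ext (sub_left_inj.1 (hyz.trans hyz'.symm)) rfl

/-- The ratio of the sums `1 + q.1` and `1 + q.2`. -/
def shiftRatio (q : F × F) : F := (1 + q.1) / (1 + q.2)

theorem add_mul_div_add_mul {a : F} (ha : a ≠ 0) (q : F × F) :
    (a + a * q.1) / (a + a * q.2) = shiftRatio q := by
  rw [← mul_one_add, ← mul_one_add, mul_div_mul_left _ _ ha, shiftRatio]

variable [DecidableEq F]

/-- The nonzero elements of the sumset `A + A`. -/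
def nonzeroSums (A : Finset F) : Finset F := (A + A).erase 0

/-- The `2 * #A`-th powers of the nonzero sums. For a multiplicative subgroup `A` this invariant is
constant on cosets of `A`, so that it takes few values. -/
def sumPowers (A : Finset F) : Finset F := (nonzeroSums A).image (· ^ (2 * #A))

/-- The ratios of two distinct nonzero sums, so that `0` and `1`, the points where Stepanov's method
breaks down, are left out. -/
def sumRatios (A : Finset F) : Finset F := (nonzeroSums A / nonzeroSums A).erase 1

/-- The ratios of sums whose fibre of `powPair (2 * #A)` is large enough for Stepanov's method. -/
noncomputable def richRatios (p : ℕ) (A : Finset F) : Finset F :=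
  {w ∈ sumRatios A | richThreshold p (2 * #A) <
    #{u ∈ sumRatios A | powPair (2 * #A) u = powPair (2 * #A) w}}

/-- The pairs of distinct nonzero sums whose ratio is not rich. -/
noncomputable def poorPairs (p : ℕ) (A : Finset F) : Finset (F × F) :=
  {q ∈ nonzeroSums A ×ˢ nonzeroSums A | q.1 ≠ q.2 ∧ q.1 / q.2 ∉ richRatios p A}

variable {p : ℕ} {A : Finset F}

theorem ne_zero_of_mem_nonzeroSums {y : F} (hy : y ∈ nonzeroSums A) : y ≠ 0 := ne_of_mem_erase hy

theorem div_mem_sumRatios {y z : F} (hy : y ∈ nonzeroSums A) (hz : z ∈ nonzeroSums A)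
    (hyz : y ≠ z) : y / z ∈ sumRatios A :=
  mem_erase.2 ⟨by rwa [ne_eq, div_eq_one_iff_eq (ne_zero_of_mem_nonzeroSums hz)],
    div_mem_div hy hz⟩

theorem zero_notMem_sumRatios : 0 ∉ sumRatios A := by
  intro h
  obtain ⟨y, hy, z, hz, h⟩ := mem_div.1 (mem_of_mem_erase h)
  exact div_ne_zero (ne_zero_of_mem_nonzeroSums hy) (ne_zero_of_mem_nonzeroSums hz) h

theorem richRatios_subset_sumRatios : richRatios p A ⊆ sumRatios A := filter_subset _ _

theorem zero_notMem_richRatios : 0 ∉ richRatios p A := fun h ↦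
  zero_notMem_sumRatios (richRatios_subset_sumRatios h)

theorem one_notMem_richRatios : 1 ∉ richRatios p A := fun h ↦
  notMem_erase 1 _ (richRatios_subset_sumRatios h)

theorem mem_richRatios_of_powPair_eq {u w : F} (hu : u ∈ sumRatios A) (hw : w ∈ richRatios p A)
    (h : powPair (2 * #A) u = powPair (2 * #A) w) : u ∈ richRatios p A :=
  mem_filter.2 ⟨hu, by simpa only [h] using (mem_filter.1 hw).2⟩

theorem richThreshold_lt_card_filter_richRatios {k : F × F}
    (hk : k ∈ (richRatios p A).image (powPair (2 * #A))) :
    richThreshold p (2 * #A) < #{u ∈ richRatios p A | powPair (2 * #A) u = k} := by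
  obtain ⟨w, hw, rfl⟩ := mem_image.1 hk
  refine (mem_filter.1 hw).2.trans_le (Nat.cast_le.2 (card_le_card fun u hu ↦ ?_))
  obtain ⟨hu, h⟩ := mem_filter.1 hu
  exact mem_filter.2 ⟨mem_richRatios_of_powPair_eq hu hw h, h⟩

theorem card_filter_powPair_le_of_notMem_richRatios {w : F} (hw : w ∈ sumRatios A)
    (hpoor : w ∉ richRatios p A) :
    (#{u ∈ sumRatios A | powPair (2 * #A) u = powPair (2 * #A) w} : ℝ) ≤
      richThreshold p (2 * #A) :=
  not_lt.1 fun h ↦ hpoor (mem_filter.2 ⟨hw, h⟩)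

theorem card_filter_poorPairs_sub_pow_eq_le (x : F) (k : F × F) :
    (#{q ∈ poorPairs p A | q.1 - q.2 = x ∧ (q.1 ^ (2 * #A), q.2 ^ (2 * #A)) = k} : ℝ) ≤
      richThreshold p (2 * #A) := by
  set S := {q ∈ poorPairs p A | q.1 - q.2 = x ∧ (q.1 ^ (2 * #A), q.2 ^ (2 * #A)) = k} with hS
  obtain h | ⟨⟨y₀, z₀⟩, hq₀⟩ := S.eq_empty_or_nonempty
  · simpa [h] using (richThreshold_pos p (2 * #A)).le
  have hmem {q : F × F} : q ∈ S → (q.1 ∈ nonzeroSums A ∧ q.2 ∈ nonzeroSums A ∧ q.1 ≠ q.2 ∧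
      q.1 / q.2 ∉ richRatios p A) ∧ q.1 - q.2 = x ∧ (q.1 ^ (2 * #A), q.2 ^ (2 * #A)) = k := by
    simp only [hS, poorPairs, mem_filter, mem_product, and_assoc, imp_self]
  obtain ⟨⟨hy₀, hz₀, hne₀, hpoor⟩, hx₀, hk₀⟩ := hmem hq₀
  refine (Nat.cast_le.2 ?_).trans
    (card_filter_powPair_le_of_notMem_richRatios (div_mem_sumRatios hy₀ hz₀ hne₀) hpoor)
  have hx0 : x ≠ 0 := hx₀ ▸ sub_ne_zero.2 hne₀
  have hinj : Set.InjOn (fun q : F × F ↦ q.1 / q.2) S :=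
    (injOn_div_of_sub_eq hx0).mono fun q hq ↦ by
      exact ⟨ne_zero_of_mem_nonzeroSums (hmem hq).1.2.1, (hmem hq).2.1⟩
  refine card_le_card_of_injOn _ (fun q hq ↦ ?_) hinj
  obtain ⟨⟨hy, hz, hne, -⟩, hx, hk⟩ := hmem hq
  obtain ⟨hky, hkz⟩ := Prod.ext_iff.1 (hk.trans hk₀.symm)
  refine mem_filter.2 ⟨div_mem_sumRatios hy hz hne, ?_⟩
  rw [powPair_div (ne_zero_of_mem_nonzeroSums hz), powPair_div (ne_zero_of_mem_nonzeroSums hz₀),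
    hx, hx₀]
  simp only at hky hkz
  rw [hky, hkz]

theorem card_filter_poorPairs_sub_eq_le (x : F) :
    (#{q ∈ poorPairs p A | q.1 - q.2 = x} : ℝ) ≤
      richThreshold p (2 * #A) * #(sumPowers A) ^ 2 := by
  have hmaps : ∀ q ∈ {q ∈ poorPairs p A | q.1 - q.2 = x},
      (q.1 ^ (2 * #A), q.2 ^ (2 * #A)) ∈ sumPowers A ×ˢ sumPowers A := by
    intro q hq
    obtain ⟨hy, hz⟩ := mem_product.1 (mem_filter.1 (mem_filter.1 hq).1).1
    exact mem_product.2 ⟨mem_image_of_mem _ hy, mem_image_of_mem _ hz⟩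
  calc (#{q ∈ poorPairs p A | q.1 - q.2 = x} : ℝ)
      = ∑ k ∈ sumPowers A ×ˢ sumPowers A,
          (#{q ∈ poorPairs p A | q.1 - q.2 = x ∧ (q.1 ^ (2 * #A), q.2 ^ (2 * #A)) = k} : ℝ) := by
        rw [card_eq_sum_card_fiberwise hmaps, Nat.cast_sum]
        simp_rw [filter_filter]
    _ ≤ #(sumPowers A ×ˢ sumPowers A) • richThreshold p (2 * #A) :=
        sum_le_card_nsmul _ _ _ fun k _ ↦ card_filter_poorPairs_sub_pow_eq_le x k
    _ = richThreshold p (2 * #A) * #(sumPowers A) ^ 2 := by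
        rw [nsmul_eq_mul, card_product, Nat.cast_mul, ← sq, mul_comm]

theorem sum_poorPairs_diffCount_sq_le :
    ∑ q ∈ poorPairs p A, (diffCount A (q.1 - q.2) : ℝ) ^ 2 ≤
      richThreshold p (2 * #A) * #(sumPowers A) ^ 2 * addEnergy A A := by
  have hθ := richThreshold_pos p (2 * #A)
  rw [sum_comp (fun x ↦ (diffCount A x : ℝ) ^ 2) fun q : F × F ↦ q.1 - q.2]
  calc _ ≤ ∑ x ∈ (poorPairs p A).image fun q ↦ q.1 - q.2,
        richThreshold p (2 * #A) * #(sumPowers A) ^ 2 * (diffCount A x : ℝ) ^ 2 :=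
        sum_le_sum fun x _ ↦ by
          rw [nsmul_eq_mul]
          gcongr
          exact card_filter_poorPairs_sub_eq_le x
    _ ≤ richThreshold p (2 * #A) * #(sumPowers A) ^ 2 * addEnergy A A := by
      rw [← mul_sum]
      gcongr
      exact_mod_cast sum_diffCount_sq_le_addEnergy A _

/-- The pairs in `A` at which the shift by `1` produces two distinct nonzero sums. -/
def shiftPairs (A : Finset F) : Finset (F × F) :=
  {q ∈ A ×ˢ A | q.1 ≠ q.2 ∧ 1 + q.1 ≠ 0 ∧ 1 + q.2 ≠ 0}

theorem mem_shiftPairs {q : F × F} : q ∈ shiftPairs A ↔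
    (q.1 ∈ A ∧ q.2 ∈ A) ∧ q.1 ≠ q.2 ∧ 1 + q.1 ≠ 0 ∧ 1 + q.2 ≠ 0 := by
  rw [shiftPairs, mem_filter, mem_product]

namespace IsMulSubgroup

theorem add_mul_mem_nonzeroSums (hA : IsMulSubgroup A) {a b : F} (ha : a ∈ A) (hb : b ∈ A)
    (h : 1 + b ≠ 0) : a + a * b ∈ nonzeroSums A := by
  rw [nonzeroSums, mem_erase, ← mul_one_add]
  exact ⟨mul_ne_zero (hA.ne_zero ha) h, mul_one_add a b ▸ add_mem_add ha (hA.mul_mem a ha b hb)⟩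

theorem add_mul_mem_poorPairs (hA : IsMulSubgroup A) {a : F} (ha : a ∈ A) {q : F × F}
    (hq : q ∈ shiftPairs A) (hpoor : shiftRatio q ∉ richRatios p A) :
    (a + a * q.1, a + a * q.2) ∈ poorPairs p A := by
  obtain ⟨⟨hb, hc⟩, hne, hb1, hc1⟩ := mem_shiftPairs.1 hq
  refine mem_filter.2 ⟨mem_product.2 ⟨hA.add_mul_mem_nonzeroSums ha hb hb1,
    hA.add_mul_mem_nonzeroSums ha hc hc1⟩, ?_, by rwa [add_mul_div_add_mul (hA.ne_zero ha)]⟩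
  simpa [hA.ne_zero ha] using hne

theorem card_mul_sum_diffCount_le (hA : IsMulSubgroup A) {P : Finset (F × F)}
    (hP : P ⊆ shiftPairs A) (hpoor : ∀ q ∈ P, shiftRatio q ∉ richRatios p A) :
    #A * ∑ q ∈ P, diffCount A (q.1 - q.2) ≤
      ∑ q ∈ poorPairs p A, #{a ∈ A | q.1 - a ∈ A ∧ q.2 - a ∈ A} * diffCount A (q.1 - q.2) := by
  have hdilate {a : F} (ha : a ∈ A) : ∑ q ∈ P, diffCount A (q.1 - q.2) ≤
      ∑ q ∈ poorPairs p A with q.1 - a ∈ A ∧ q.2 - a ∈ A, diffCount A (q.1 - q.2) := by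
    have hinj : Set.InjOn (fun q : F × F ↦ (a + a * q.1, a + a * q.2)) P := fun q _ q' _ h ↦ by
      simpa [hA.ne_zero ha, Prod.ext_iff] using h
    calc ∑ q ∈ P, diffCount A (q.1 - q.2)
        = ∑ q ∈ P.image fun q ↦ (a + a * q.1, a + a * q.2), diffCount A (q.1 - q.2) := by
          rw [sum_image hinj]
          exact sum_congr rfl fun q _ ↦ by
            rw [add_sub_add_left_eq_sub, ← mul_sub, hA.diffCount_mul ha]
      _ ≤ _ := by
          refine sum_le_sum_of_subset fun u hu ↦ ?_
          obtain ⟨q, hq, rfl⟩ := mem_image.1 hu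
          obtain ⟨⟨hb, hc⟩, -⟩ := mem_shiftPairs.1 (hP hq)
          refine mem_filter.2 ⟨hA.add_mul_mem_poorPairs ha (hP hq) (hpoor q hq), ?_, ?_⟩ <;>
            simpa only [add_sub_cancel_left] using hA.mul_mem a ha _ (by assumption)
  calc #A * ∑ q ∈ P, diffCount A (q.1 - q.2)
      = ∑ _ ∈ A, ∑ q ∈ P, diffCount A (q.1 - q.2) := by rw [sum_const, smul_eq_mul]
    _ ≤ ∑ a ∈ A, ∑ q ∈ poorPairs p A with q.1 - a ∈ A ∧ q.2 - a ∈ A, diffCount A (q.1 - q.2) :=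
        sum_le_sum fun a ha ↦ hdilate ha
    _ = ∑ q ∈ poorPairs p A, ∑ a ∈ A with q.1 - a ∈ A ∧ q.2 - a ∈ A, diffCount A (q.1 - q.2) := by
        simp_rw [sum_filter]
        exact sum_comm
    _ = _ := by simp_rw [sum_const, smul_eq_mul]

theorem sq_card_mul_sum_diffCount_le (hA : IsMulSubgroup A) {P : Finset (F × F)}
    (hP : P ⊆ shiftPairs A) (hpoor : ∀ q ∈ P, shiftRatio q ∉ richRatios p A) :
    (#A * ∑ q ∈ P, (diffCount A (q.1 - q.2) : ℝ)) ^ 2 ≤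
      (∑ x ∈ A - A, (diffCount A x : ℝ) ^ 3) *
        (richThreshold p (2 * #A) * #(sumPowers A) ^ 2 * addEnergy A A) := by
  calc (#A * ∑ q ∈ P, (diffCount A (q.1 - q.2) : ℝ)) ^ 2
      ≤ (∑ q ∈ poorPairs p A, (#{a ∈ A | q.1 - a ∈ A ∧ q.2 - a ∈ A} : ℝ) *
          diffCount A (q.1 - q.2)) ^ 2 := by
        gcongr
        exact_mod_cast hA.card_mul_sum_diffCount_le hP hpoor
    _ ≤ (∑ q ∈ poorPairs p A, (#{a ∈ A | q.1 - a ∈ A ∧ q.2 - a ∈ A} : ℝ) ^ 2) *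
          ∑ q ∈ poorPairs p A, (diffCount A (q.1 - q.2) : ℝ) ^ 2 :=
        sum_mul_sq_le_sq_mul_sq _ _ _
    _ ≤ _ := by
        gcongr
        · exact_mod_cast sum_card_filter_sub_mem_sq_le A (poorPairs p A)
        · exact sum_poorPairs_diffCount_sq_le

end IsMulSubgroup

theorem shiftRatio_ne_zero {q : F × F} (hq : q ∈ shiftPairs A) : shiftRatio q ≠ 0 :=
  have h := mem_shiftPairs.1 hq
  div_ne_zero h.2.2.1 h.2.2.2

theorem shiftRatio_ne_one {q : F × F} (hq : q ∈ shiftPairs A) : shiftRatio q ≠ 1 := by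
  have h := mem_shiftPairs.1 hq
  rw [shiftRatio, ne_eq, div_eq_one_iff_eq h.2.2.2, add_right_inj]
  exact h.2.1

namespace IsMulSubgroup

theorem shiftRatio_mul_div_sub_one (hA : IsMulSubgroup A) {q : F × F} (hq : q ∈ shiftPairs A) :
    shiftRatio q * (q.2 / q.1) - 1 = (1 - shiftRatio q) / q.1 := by
  obtain ⟨⟨hb, -⟩, -, -, hc1⟩ := mem_shiftPairs.1 hq
  have hb0 := hA.ne_zero hb
  rw [shiftRatio]
  field_simp
  ring

theorem shiftRatio_mul_div_mem_sumRatios (hA : IsMulSubgroup A) {q : F × F}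
    (hq : q ∈ shiftPairs A) : shiftRatio q * (q.2 / q.1) ∈ sumRatios A := by
  obtain ⟨⟨hb, hc⟩, hne, hb1, hc1⟩ := mem_shiftPairs.1 hq
  have heq : shiftRatio q * (q.2 / q.1) = (q.2 + q.2 * q.1) / (q.1 + q.1 * q.2) := by
    rw [← mul_one_add, ← mul_one_add, shiftRatio, div_mul_div_comm, mul_comm, mul_comm q.1]
  rw [heq]
  refine div_mem_sumRatios (hA.add_mul_mem_nonzeroSums hc hb hb1)
    (hA.add_mul_mem_nonzeroSums hb hc hc1) ?_
  rw [mul_comm, ne_eq, add_left_inj]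
  exact hne.symm

theorem powPair_shiftRatio_mul_div (hA : IsMulSubgroup A) {q : F × F} (hq : q ∈ shiftPairs A) :
    powPair (2 * #A) (shiftRatio q * (q.2 / q.1)) = powPair (2 * #A) (shiftRatio q) := by
  obtain ⟨⟨hb, hc⟩, -⟩ := mem_shiftPairs.1 hq
  rw [powPair, hA.shiftRatio_mul_div_sub_one hq, mul_pow, div_pow, div_pow,
    hA.pow_two_mul_card_eq_one hb, hA.pow_two_mul_card_eq_one hc, div_one, div_one, mul_one,
    powPair, ← neg_sub, (even_two_mul _).neg_pow]

theorem card_filter_shiftRatio_eq_le (hA : IsMulSubgroup A) {w : F} (hw : w ∈ richRatios p A) :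
    #{q ∈ shiftPairs A | shiftRatio q = w} ≤
      #{u ∈ richRatios p A | powPair (2 * #A) u = powPair (2 * #A) w} := by
  refine card_le_card_of_injOn (fun q ↦ shiftRatio q * (q.2 / q.1)) (fun q hq ↦ ?_)
    fun q hq q' hq' h ↦ ?_
  · obtain ⟨hqA, rfl⟩ := mem_filter.1 hq
    have hpow := hA.powPair_shiftRatio_mul_div hqA
    exact mem_filter.2 ⟨mem_richRatios_of_powPair_eq (hA.shiftRatio_mul_div_mem_sumRatios hqA) hw
      hpow, hpow⟩
  · obtain ⟨hqA, rfl⟩ := mem_filter.1 hq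
    obtain ⟨hqA', heq⟩ := mem_filter.1 hq'
    have h1 : q.1 = q'.1 := by
      have hsub : (1 - shiftRatio q) / q.1 = (1 - shiftRatio q) / q'.1 := by
        rw [← hA.shiftRatio_mul_div_sub_one hqA, ← heq, ← hA.shiftRatio_mul_div_sub_one hqA']
        simpa only [heq] using congrArg (· - 1) h
      simpa [div_eq_mul_inv, sub_ne_zero.2 (shiftRatio_ne_one hqA).symm] using hsub
    refine Prod.ext h1 ?_
    simp only [heq, h1] at h
    exact (div_left_inj' (hA.ne_zero (mem_shiftPairs.1 hqA').1.1)).1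
      (mul_left_cancel₀ (shiftRatio_ne_zero hqA) h)

theorem sum_card_filter_shiftRatio_sq_le [CharP F p] (hA : IsMulSubgroup A) (hn : 2 ≤ #A)
    (hp : 16 * (2 * #A) ^ 4 ≤ p ^ 3) :
    ∑ w ∈ richRatios p A, (#{q ∈ shiftPairs A | shiftRatio q = w} : ℝ) ^ 2 ≤
      2 ^ 19 * #A ^ 2 * (1 + Real.log #A) := by
  set φ : F → F × F := powPair (2 * #A)
  calc ∑ w ∈ richRatios p A, (#{q ∈ shiftPairs A | shiftRatio q = w} : ℝ) ^ 2
      ≤ ∑ w ∈ richRatios p A, (#{u ∈ richRatios p A | φ u = φ w} : ℝ) ^ 2 := by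
        gcongr with w hw
        exact hA.card_filter_shiftRatio_eq_le hw
    _ = ∑ k ∈ (richRatios p A).image φ, (#{u ∈ richRatios p A | φ u = k} : ℝ) ^ 3 := by
        rw [sum_comp (fun k ↦ (#{u ∈ richRatios p A | φ u = k} : ℝ) ^ 2) φ]
        simp_rw [nsmul_eq_mul, ← pow_succ']
    _ ≤ 3 * (2 ^ 14 * (2 * #A : ℕ) ^ 2) * (1 + Real.log (2 * #A : ℕ)) :=
        sum_card_pow_three_le_of_rich (by omega) hp zero_notMem_richRatios one_notMem_richRatios
          fun k hk ↦ richThreshold_lt_card_filter_richRatios hk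
    _ ≤ 2 ^ 19 * #A ^ 2 * (1 + Real.log #A) := by
        have hlog : Real.log (2 * #A : ℕ) ≤ 1 + Real.log #A := by
          rw [Nat.cast_mul, Nat.cast_ofNat, Real.log_mul two_ne_zero (by positivity)]
          linarith [Real.log_two_lt_d9]
        rw [Nat.cast_mul, Nat.cast_ofNat] at *
        nlinarith [Real.log_natCast_nonneg #A, sq_nonneg (#A : ℝ)]

theorem mul_mem_sub (hA : IsMulSubgroup A) {a x : F} (ha : a ∈ A) (hx : x ∈ A - A) :
    a * x ∈ A - A := by
  obtain ⟨u, hu, v, hv, rfl⟩ := Finset.mem_sub.1 hx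
  exact mul_sub a u v ▸ sub_mem_sub (hA.mul_mem a ha u hu) (hA.mul_mem a ha v hv)

theorem card_image_powPair_le (hA : IsMulSubgroup A) {W X : Finset F}
    (hW : ∀ w ∈ W, ∃ q ∈ shiftPairs A, shiftRatio q = w ∧ q.1 - q.2 ∈ X) :
    #(W.image (powPair (2 * #A))) ≤ #(sumPowers A) ^ 2 * #(X.image (· ^ (2 * #A))) := by
  rw [sq, ← card_product, ← card_product]
  refine (card_le_card fun k hk ↦ ?_).trans
    (card_image_le (f := fun u : (F × F) × F ↦ (u.1.1 / u.1.2, u.2 / u.1.2)))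
  obtain ⟨w, hw, rfl⟩ := mem_image.1 hk
  obtain ⟨q, hq, rfl, hqX⟩ := hW w hw
  obtain ⟨⟨hb, hc⟩, -, hb1, hc1⟩ := mem_shiftPairs.1 hq
  have hsum {b : F} (hb : b ∈ A) (hb1 : 1 + b ≠ 0) : (1 + b) ^ (2 * #A) ∈ sumPowers A :=
    mem_image_of_mem _ (by simpa using hA.add_mul_mem_nonzeroSums hA.one_mem hb hb1)
  rw [shiftRatio, powPair_div hc1, add_sub_add_left_eq_sub]
  exact mem_image.2 ⟨(((1 + q.1) ^ (2 * #A), (1 + q.2) ^ (2 * #A)), (q.1 - q.2) ^ (2 * #A)),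
    mem_product.2 ⟨mem_product.2 ⟨hsum hb hb1, hsum hc hc1⟩,
      mem_image_of_mem (· ^ (2 * #A)) hqX⟩, rfl⟩

theorem card_pow_three_mul_le_of_forall_exists [CharP F p] (hA : IsMulSubgroup A) (hn : 2 ≤ #A)
    (hp : 16 * (2 * #A) ^ 4 ≤ p ^ 3) {W : Finset F} (hW : W ⊆ richRatios p A) {m : ℕ}
    (hm : ∀ w ∈ W, ∃ q ∈ shiftPairs A, shiftRatio q = w ∧ m ≤ diffCount A (q.1 - q.2)) :
    #W ^ 3 * m ^ 4 ≤ 2 ^ 16 * (#(sumPowers A) ^ 2 * addEnergy A A) ^ 2 := by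
  set N := 2 * #A
  set X : Finset F := {x ∈ A - A | x ≠ 0 ∧ m ≤ diffCount A x}
  have hX : #X * m ^ 2 ≤ addEnergy A A :=
    (card_nsmul_le_sum X _ _ fun x hx ↦ Nat.pow_le_pow_left (mem_filter.1 hx).2.2 2).trans
      (sum_diffCount_sq_le_addEnergy A X)
  have hXpow : #A * #(X.image (· ^ N)) ≤ #X := by
    refine hA.card_mul_card_image_pow_le (by simp [X]) fun a ha x hx ↦ ?_
    obtain ⟨hx, hx0, hmx⟩ := mem_filter.1 hx
    exact mem_filter.2 ⟨hA.mul_mem_sub ha hx, mul_ne_zero (hA.ne_zero ha) hx0,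
      (hA.diffCount_mul ha x).symm ▸ hmx⟩
  have hclasses : #(W.image (powPair N)) ≤ #(sumPowers A) ^ 2 * #(X.image (· ^ N)) :=
    hA.card_image_powPair_le fun w hw ↦ by
      obtain ⟨q, hq, rfl, hmq⟩ := hm w hw
      obtain ⟨⟨hb, hc⟩, hne, -⟩ := mem_shiftPairs.1 hq
      exact ⟨q, hq, rfl, mem_filter.2 ⟨sub_mem_sub hb hc, sub_ne_zero.2 hne, hmq⟩⟩
  calc #W ^ 3 * m ^ 4 ≤ 2 ^ 14 * (#(W.image (powPair N)) * N) ^ 2 * m ^ 4 := by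
        gcongr
        exact card_pow_three_le_of_rich (by omega) hp zero_notMem_richRatios one_notMem_richRatios
          (fun k hk ↦ richThreshold_lt_card_filter_richRatios hk) hW
    _ ≤ 2 ^ 14 * (#(sumPowers A) ^ 2 * #(X.image (· ^ N)) * N) ^ 2 * m ^ 4 := by gcongr
    _ = 2 ^ 16 * (#(sumPowers A) ^ 2 * (#A * #(X.image (· ^ N)) * m ^ 2)) ^ 2 := by ring
    _ ≤ 2 ^ 16 * (#(sumPowers A) ^ 2 * addEnergy A A) ^ 2 := by
        gcongr
        exact (Nat.mul_le_mul_right _ hXpow).trans hX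

theorem sq_sum_diffCount_pow_three_le [CharP F p] (hA : IsMulSubgroup A) (hn : 2 ≤ #A)
    (hp : 16 * (2 * #A) ^ 4 ≤ p ^ 3) {P : Finset (F × F)} (hP : P ⊆ shiftPairs A)
    (hrich : ∀ q ∈ P, shiftRatio q ∈ richRatios p A) {M : ℕ}
    (hM : ∀ q ∈ P, diffCount A (q.1 - q.2) ≤ M) :
    ((∑ q ∈ P, (diffCount A (q.1 - q.2) : ℝ)) ^ 2) ^ 3 ≤
      (2 ^ 19 * #A ^ 2 * (1 + Real.log #A)) ^ 3 *
        (27 * (2 ^ 16 * (#(sumPowers A) ^ 2 * addEnergy A A) ^ 2) * M ^ 2) := by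
  have hcount : ∑ w ∈ P.image shiftRatio, (#{q ∈ P | shiftRatio q = w} : ℝ) ^ 2 ≤
      2 ^ 19 * #A ^ 2 * (1 + Real.log #A) := by
    refine (sum_le_sum_of_subset_of_nonneg (image_subset_iff.2 hrich)
      fun _ _ _ ↦ by positivity).trans ((sum_le_sum fun w _ ↦ ?_).trans
        (hA.sum_card_filter_shiftRatio_sq_le hn hp))
    gcongr
  have hmax : (∑ w ∈ P.image shiftRatio,
      (({q ∈ P | shiftRatio q = w}.sup fun q ↦ diffCount A (q.1 - q.2) : ℕ) : ℝ) ^ 2) ^ 3 ≤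
        27 * (2 ^ 16 * (#(sumPowers A) ^ 2 * addEnergy A A) ^ 2) * M ^ 2 := by
    refine sum_sq_pow_three_le_of_card_pow_three_mul_le (fun w _ ↦ ?_) fun m hm ↦ ?_
    · exact Finset.sup_le fun q hq ↦ hM q (filter_subset _ _ hq)
    · norm_cast
      refine hA.card_pow_three_mul_le_of_forall_exists hn hp
        ((filter_subset _ _).trans (image_subset_iff.2 hrich)) fun w hw ↦ ?_
      obtain ⟨q, hq, hmq⟩ := (Finset.le_sup_iff (show 0 < m from hm)).1 (mem_filter.1 hw).2
      obtain ⟨hq, hqw⟩ := mem_filter.1 hq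
      exact ⟨q, hP hq, hqw, hmq⟩
  calc ((∑ q ∈ P, (diffCount A (q.1 - q.2) : ℝ)) ^ 2) ^ 3
      ≤ _ := pow_le_pow_left₀ (sq_nonneg _)
        (sq_sum_le_sum_card_sq_mul_sum_sup_sq P shiftRatio fun q ↦ diffCount A (q.1 - q.2)) 3
    _ ≤ _ := by
      rw [mul_pow]
      exact mul_le_mul (pow_le_pow_left₀ (by positivity) hcount 3) hmax (by positivity)
        (by have := Real.log_natCast_nonneg #A; positivity)

end IsMulSubgroup

end SumRatios

section EnergyBound

variable {F : Type*} [Field F] [DecidableEq F] {p : ℕ} {A : Finset F}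

theorem addEnergy_le_add_sum_shiftPairs (A : Finset F) :
    addEnergy A A ≤ 3 * #A ^ 2 + ∑ q ∈ shiftPairs A, diffCount A (q.1 - q.2) := by
  have hsplit : A ×ˢ A ⊆
      (A.diag ∪ ({-1} ×ˢ A ∪ A ×ˢ {-1})) ∪ shiftPairs A := by
    intro q hq
    have h := mem_product.1 hq
    simp only [mem_union, mem_diag, mem_product, mem_singleton, mem_shiftPairs,
      eq_neg_iff_add_eq_zero, add_comm _ (1 : F)]
    tauto
  have hcard : #(A.diag ∪ ({-1} ×ˢ A ∪ A ×ˢ {-1})) ≤ 3 * #A := by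
    refine (card_union_le _ _).trans ?_
    grw [card_union_le]
    simp only [diag_card, card_product, card_singleton]
    omega
  rw [addEnergy_eq_sum_product_diffCount]
  calc ∑ q ∈ A ×ˢ A, diffCount A (q.1 - q.2)
      ≤ ∑ q ∈ A.diag ∪ ({-1} ×ˢ A ∪ A ×ˢ {-1}), diffCount A (q.1 - q.2) +
          ∑ q ∈ shiftPairs A, diffCount A (q.1 - q.2) :=
        (sum_le_sum_of_subset hsplit).trans (Nat.le.intro sum_union_inter)
    _ ≤ 3 * #A * #A + ∑ q ∈ shiftPairs A, diffCount A (q.1 - q.2) := by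
        gcongr
        exact (sum_le_card_nsmul _ _ _ fun q _ ↦ diffCount_le_card A _).trans
          (Nat.mul_le_mul_right _ hcard)
    _ = _ := by ring

theorem sum_shiftPairs_diffCount_le (A : Finset F) (M : ℕ) :
    ∑ q ∈ shiftPairs A with M ≤ diffCount A (q.1 - q.2), diffCount A (q.1 - q.2) ≤
      ∑ x ∈ A - A with x ≠ 0 ∧ M ≤ diffCount A x, diffCount A x ^ 2 := by
  calc _ ≤ ∑ q ∈ A ×ˢ A with q.1 - q.2 ≠ 0 ∧ M ≤ diffCount A (q.1 - q.2),
        diffCount A (q.1 - q.2) := by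
        refine sum_le_sum_of_subset fun q hq ↦ ?_
        obtain ⟨hq, hM⟩ := mem_filter.1 hq
        obtain ⟨hq, hne, -⟩ := mem_filter.1 hq
        exact mem_filter.2 ⟨hq, sub_ne_zero.2 hne, hM⟩
    _ = _ := by
        rw [sum_filter, sum_product_sub_eq_sum_diffCount_smul A fun x ↦
          if x ≠ 0 ∧ M ≤ diffCount A x then diffCount A x else 0, sum_filter]
        simp only [smul_eq_mul, mul_ite, mul_zero, sq]

namespace IsMulSubgroup

theorem addEnergy_le_two_mul_sum [CharP F p] (hA : IsMulSubgroup A) (hn : 2 ≤ #A)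
    (hp : 16 * (2 * #A) ^ 4 ≤ p ^ 3) {M : ℕ} (hM : richThreshold p (2 * #A) < M)
    (hE : 8 * #A ^ 2 ≤ addEnergy A A) (hME : (2 ^ 22 * #A ^ 3 : ℝ) ≤ M * addEnergy A A) :
    (addEnergy A A : ℝ) ≤ 2 * ∑ q ∈ shiftPairs A with diffCount A (q.1 - q.2) < M,
      (diffCount A (q.1 - q.2) : ℝ) := by
  have hM0 : (0 : ℝ) < M := (richThreshold_pos p (2 * #A)).trans hM
  have hle : (addEnergy A A : ℝ) ≤
      3 * #A ^ 2 + ∑ q ∈ shiftPairs A, (diffCount A (q.1 - q.2) : ℝ) :=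
    mod_cast addEnergy_le_add_sum_shiftPairs A
  have htail : ∑ q ∈ shiftPairs A with ¬ diffCount A (q.1 - q.2) < M,
      (diffCount A (q.1 - q.2) : ℝ) ≤ addEnergy A A / 8 :=
    calc _ ≤ ∑ x ∈ A - A with x ≠ 0 ∧ M ≤ diffCount A x, (diffCount A x : ℝ) ^ 2 := by
          simp_rw [not_lt]
          exact_mod_cast sum_shiftPairs_diffCount_le A M
      _ ≤ 2 ^ 19 * #A ^ 3 / M := hA.sum_diffCount_sq_le hn hp hM
      _ ≤ addEnergy A A / 8 := by
          rw [div_le_div_iff₀ hM0 (by norm_num)]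
          linarith
  rw [← sum_filter_add_sum_filter_not _ fun q : F × F ↦ diffCount A (q.1 - q.2) < M] at hle
  have hE' : (8 * #A ^ 2 : ℝ) ≤ addEnergy A A := mod_cast hE
  linarith

theorem card_mul_card_sumPowers_le (hA : IsMulSubgroup A) : #A * #(sumPowers A) ≤ #(A + A) := by
  refine (hA.card_mul_card_image_pow_le (notMem_erase 0 _) fun a ha y hy ↦ ?_).trans
    (card_le_card (erase_subset 0 _))
  obtain ⟨hy0, hy⟩ := mem_erase.1 hy
  obtain ⟨u, hu, v, hv, rfl⟩ := mem_add.1 hy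
  exact mem_erase.2 ⟨mul_ne_zero (hA.ne_zero ha) hy0,
    mul_add a u v ▸ add_mem_add (hA.mul_mem a ha u hu) (hA.mul_mem a ha v hv)⟩

theorem addEnergy_pow_six_le_of_rich [CharP F p] (hA : IsMulSubgroup A) (hn : 2 ≤ #A)
    (hp : 16 * (2 * #A) ^ 4 ≤ p ^ 3) {P : Finset (F × F)} (hP : P ⊆ shiftPairs A)
    (hrich : ∀ q ∈ P, shiftRatio q ∈ richRatios p A) {M : ℕ}
    (hM : ∀ q ∈ P, diffCount A (q.1 - q.2) ≤ M)
    (hE : (addEnergy A A : ℝ) ≤ 4 * ∑ q ∈ P, (diffCount A (q.1 - q.2) : ℝ)) :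
    (addEnergy A A : ℝ) ^ 6 ≤
      2 ^ 90 * #A ^ 2 * (1 + Real.log #A) ^ 3 * #(A + A) ^ 4 * (M * addEnergy A A) ^ 2 := by
  have := Real.log_natCast_nonneg #A
  have hcard : (#A * #(sumPowers A) : ℝ) ≤ #(A + A) := mod_cast hA.card_mul_card_sumPowers_le
  have hsum := hA.sq_sum_diffCount_pow_three_le hn hp hP hrich hM
  calc (addEnergy A A : ℝ) ^ 6
      ≤ (4 * ∑ q ∈ P, (diffCount A (q.1 - q.2) : ℝ)) ^ 6 := by gcongr
    _ = 4 ^ 6 * ((∑ q ∈ P, (diffCount A (q.1 - q.2) : ℝ)) ^ 2) ^ 3 := by ring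
    _ ≤ 4 ^ 6 * ((2 ^ 19 * #A ^ 2 * (1 + Real.log #A)) ^ 3 *
          (27 * (2 ^ 16 * (#(sumPowers A) ^ 2 * addEnergy A A) ^ 2) * M ^ 2)) := by gcongr
    _ = 27 * 2 ^ 85 * (#A ^ 2 * (1 + Real.log #A) ^ 3 * (#A * #(sumPowers A)) ^ 4 *
          (M * addEnergy A A) ^ 2) := by ring
    _ ≤ 2 ^ 90 * (#A ^ 2 * (1 + Real.log #A) ^ 3 * #(A + A) ^ 4 * (M * addEnergy A A) ^ 2) := by
        gcongr
        norm_num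
    _ = _ := by ring

theorem addEnergy_le_of_poor [CharP F p] (hA : IsMulSubgroup A) (hn : 2 ≤ #A)
    (hp : 16 * (2 * #A) ^ 4 ≤ p ^ 3) {P : Finset (F × F)} (hP : P ⊆ shiftPairs A)
    (hpoor : ∀ q ∈ P, shiftRatio q ∉ richRatios p A)
    (hE : (addEnergy A A : ℝ) ≤ 4 * ∑ q ∈ P, (diffCount A (q.1 - q.2) : ℝ)) :
    (#A : ℝ) ^ 4 * addEnergy A A ≤ 16 * ((richThreshold p (2 * #A) * #A) ^ 2 +
      2 ^ 19 * #A ^ 3 * (1 + Real.log #A)) * (richThreshold p (2 * #A) * #(A + A) ^ 2) := by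
  have := Real.log_natCast_nonneg #A
  have hθ := richThreshold_pos p (2 * #A)
  have hcard : (#A * #(sumPowers A) : ℝ) ≤ #(A + A) := mod_cast hA.card_mul_card_sumPowers_le
  have hE0 : (0 : ℝ) < addEnergy A A :=
    Nat.cast_pos.2 (addEnergy_self_pos ⟨1, hA.one_mem⟩)
  have hsum := hA.sq_card_mul_sum_diffCount_le hP hpoor
  refine le_of_mul_le_mul_right ?_ hE0
  calc (#A : ℝ) ^ 4 * addEnergy A A * addEnergy A A
      = #A ^ 2 * (#A * addEnergy A A) ^ 2 := by ring
    _ ≤ #A ^ 2 * (#A * (4 * ∑ q ∈ P, (diffCount A (q.1 - q.2) : ℝ))) ^ 2 := by gcongr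
    _ = 16 * #A ^ 2 * (#A * ∑ q ∈ P, (diffCount A (q.1 - q.2) : ℝ)) ^ 2 := by ring
    _ ≤ 16 * #A ^ 2 * (((richThreshold p (2 * #A) * #A) ^ 2 +
          2 ^ 19 * #A ^ 3 * (1 + Real.log #A)) *
            (richThreshold p (2 * #A) * #(sumPowers A) ^ 2 * addEnergy A A)) := by
        grw [hsum, hA.sum_diffCount_pow_three_le hn hp]
    _ = 16 * ((richThreshold p (2 * #A) * #A) ^ 2 + 2 ^ 19 * #A ^ 3 * (1 + Real.log #A)) *
          (richThreshold p (2 * #A) * (#A * #(sumPowers A)) ^ 2) * addEnergy A A := by ring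
    _ ≤ _ := by gcongr

theorem addEnergy_pow_six_le_or_le [CharP F p] (hA : IsMulSubgroup A) (hn : 2 ≤ #A)
    (hp : 16 * (2 * #A) ^ 4 ≤ p ^ 3) {M : ℕ} (hM : richThreshold p (2 * #A) < M)
    (hE : 8 * #A ^ 2 ≤ addEnergy A A) (hME : (2 ^ 22 * #A ^ 3 : ℝ) ≤ M * addEnergy A A) :
    (addEnergy A A : ℝ) ^ 6 ≤
        2 ^ 90 * #A ^ 2 * (1 + Real.log #A) ^ 3 * #(A + A) ^ 4 * (M * addEnergy A A) ^ 2 ∨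
      (#A : ℝ) ^ 4 * addEnergy A A ≤ 16 * ((richThreshold p (2 * #A) * #A) ^ 2 +
        2 ^ 19 * #A ^ 3 * (1 + Real.log #A)) * (richThreshold p (2 * #A) * #(A + A) ^ 2) := by
  have hsum := hA.addEnergy_le_two_mul_sum hn hp hM hE hME
  set P := {q ∈ shiftPairs A | diffCount A (q.1 - q.2) < M}
  have hP (r : F × F → Prop) [DecidablePred r] : P.filter r ⊆ shiftPairs A :=
    (filter_subset _ P).trans (filter_subset _ _)
  rw [← sum_filter_add_sum_filter_not P fun q : F × F ↦ shiftRatio q ∈ richRatios p A] at hsum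
  obtain hrich | hpoor : (addEnergy A A : ℝ) ≤ 4 * ∑ q ∈ P with shiftRatio q ∈ richRatios p A,
        (diffCount A (q.1 - q.2) : ℝ) ∨ (addEnergy A A : ℝ) ≤
      4 * ∑ q ∈ P with shiftRatio q ∉ richRatios p A, (diffCount A (q.1 - q.2) : ℝ) := by
    by_contra! h
    linarith
  · exact Or.inl <| hA.addEnergy_pow_six_le_of_rich hn hp (hP _)
      (fun q hq ↦ (mem_filter.1 hq).2)
      (fun q hq ↦ (mem_filter.1 (filter_subset _ _ hq)).2.le) hrich
  · exact Or.inr <| hA.addEnergy_le_of_poor hn hp (hP _) (fun q hq ↦ (mem_filter.1 hq).2) hpoor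

theorem addEnergy_le_two_mul_card_sq_mul [CharP F p] (hA : IsMulSubgroup A)
    (hn : 2 ≤ #A) (hp : 16 * (2 * #A) ^ 4 ≤ p ^ 3) {M : ℕ}
    (hM : richThreshold p (2 * #A) < M) (hE : 8 * #A ^ 2 ≤ addEnergy A A)
    (hME : (2 ^ 22 * #A ^ 3 : ℝ) ≤ M * addEnergy A A) :
    (addEnergy A A : ℝ) ≤ 2 * #A ^ 2 * M := by
  have hcard : #(A ×ˢ A) = #A ^ 2 := by rw [card_product, sq]
  have hsub : {q ∈ shiftPairs A | diffCount A (q.1 - q.2) < M} ⊆ A ×ˢ A :=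
    (filter_subset _ _).trans (filter_subset _ _)
  have hsum : ∑ q ∈ shiftPairs A with diffCount A (q.1 - q.2) < M, diffCount A (q.1 - q.2) ≤
      #A ^ 2 * M :=
    (sum_le_card_nsmul _ _ M fun q hq ↦ (mem_filter.1 hq).2.le).trans
      (Nat.mul_le_mul_right M (hcard ▸ card_le_card hsub))
  have h := hA.addEnergy_le_two_mul_sum hn hp hM hE hME
  grw [← Nat.cast_sum, hsum] at h
  push_cast at h
  linarith

end IsMulSubgroup

theorem mul_richThreshold_le (p n : ℕ) :
    p * richThreshold p (2 * n) ≤ 81 * (p + 4 * (n : ℝ) ^ 2) := by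
  obtain rfl | hp := p.eq_zero_or_pos
  · simp only [Nat.cast_zero, zero_mul]
    positivity
  · rw [richThreshold]
    push_cast
    field_simp
    linarith

theorem richThreshold_mul_sq_le {p n : ℕ} (hp : 0 < p) (hn : 1 ≤ n) {C : ℝ} (hC : 0 ≤ C)
    (hnp : (n : ℝ) ^ 3 ≤ C * p ^ 2) :
    (richThreshold p (2 * n) * n) ^ 2 ≤ 2 ^ 18 * (1 + C) * n ^ 3 := by
  have hθ := richThreshold_pos p (2 * n)
  have hn2 : (n : ℝ) ^ 2 ≤ n ^ 3 := pow_le_pow_right₀ (mod_cast hn) (by norm_num)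
  refine le_of_mul_le_mul_left ?_ (show (0 : ℝ) < p ^ 2 by positivity)
  calc (p : ℝ) ^ 2 * (richThreshold p (2 * n) * n) ^ 2
      = (p * richThreshold p (2 * n)) ^ 2 * n ^ 2 := by ring
    _ ≤ (81 * (p + 4 * (n : ℝ) ^ 2)) ^ 2 * n ^ 2 := by grw [mul_richThreshold_le]
    _ ≤ 81 ^ 2 * (2 * (p ^ 2 + (4 * n ^ 2) ^ 2)) * n ^ 2 := by
        rw [mul_pow]
        grw [add_sq_le]
    _ = 13122 * (p ^ 2 * n ^ 2 + 16 * n ^ 3 * n ^ 3) := by ring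
    _ ≤ 13122 * (p ^ 2 * n ^ 3 + 16 * (C * p ^ 2) * n ^ 3) := by gcongr
    _ ≤ p ^ 2 * (2 ^ 18 * (1 + C) * n ^ 3) := by
        have : (0 : ℝ) ≤ p ^ 2 * n ^ 3 := by positivity
        have : 0 ≤ p ^ 2 * n ^ 3 * C := by positivity
        linarith

theorem exists_cutoff (p : ℕ) {A : Finset F} (hA : A.Nonempty) :
    ∃ M : ℕ, richThreshold p (2 * #A) < M ∧ (2 ^ 22 * #A ^ 3 : ℝ) ≤ M * addEnergy A A ∧
      p * (M * addEnergy A A : ℝ) ≤ 2 ^ 23 * (p * #A ^ 3 + #A ^ 2 * addEnergy A A) := by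
  have hE0 : (0 : ℝ) < addEnergy A A := Nat.cast_pos.2 (addEnergy_self_pos hA)
  have hE : (addEnergy A A : ℝ) ≤ #A ^ 3 := mod_cast addEnergy_le_card_pow_three A
  set θ := richThreshold p (2 * #A)
  set R : ℝ := 2 ^ 22 * #A ^ 3 / addEnergy A A
  have hθ0 : 0 < θ := richThreshold_pos p (2 * #A)
  have hRE : R * addEnergy A A = 2 ^ 22 * #A ^ 3 := div_mul_cancel₀ _ hE0.ne'
  refine ⟨⌊θ⌋₊ + 1 + ⌈R⌉₊, ?_, ?_, ?_⟩
  · push_cast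
    have := Nat.lt_floor_add_one θ
    have : (0 : ℝ) ≤ ⌈R⌉₊ := Nat.cast_nonneg _
    linarith
  · rw [← hRE]
    gcongr
    exact (Nat.le_ceil R).trans (Nat.cast_le.2 (Nat.le_add_left _ _))
  · have hM : ((⌊θ⌋₊ + 1 + ⌈R⌉₊ : ℕ) : ℝ) ≤ θ + 2 + R := by
      push_cast
      have := Nat.floor_le hθ0.le
      have := Nat.ceil_lt_add_one (show 0 ≤ R by positivity)
      linarith
    calc _ ≤ (p : ℝ) * ((θ + 2 + R) * addEnergy A A) := by gcongr
      _ = (p * θ) * addEnergy A A + 2 * (p * addEnergy A A) + p * (R * addEnergy A A) := by ring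
      _ ≤ 81 * (p + 4 * #A ^ 2) * addEnergy A A + 2 * (p * addEnergy A A) +
            p * (2 ^ 22 * #A ^ 3) := by
          grw [hRE, mul_richThreshold_le]
      _ = 83 * (p * addEnergy A A) + 324 * (#A ^ 2 * addEnergy A A) +
            2 ^ 22 * (p * #A ^ 3) := by ring
      _ ≤ 83 * (p * #A ^ 3) + 324 * (#A ^ 2 * addEnergy A A) + 2 ^ 22 * (p * #A ^ 3) := by gcongr
      _ ≤ _ := by
        have : (0 : ℝ) ≤ p * #A ^ 3 := by positivity
        have : (0 : ℝ) ≤ #A ^ 2 * addEnergy A A := by positivity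
        linarith

theorem pow_six_le_or_mul_le_of_rich {p n s l E X : ℝ} (hp : 0 < p) (hn : 0 < n) (hns : n ≤ s)
    (hl : 0 < l) (hE0 : 0 < E) (hX0 : 0 ≤ X) (hX : p * X ≤ 2 ^ 23 * (p * n ^ 3 + n ^ 2 * E))
    (hE : E ^ 6 ≤ 2 ^ 90 * n ^ 2 * l ^ 3 * s ^ 4 * X ^ 2) :
    E ^ 6 ≤ 2 ^ 138 * n ^ 8 * s ^ 4 * l ^ 3 ∨ p * E ≤ 2 ^ 69 * n * s ^ 2 * l := by
  have hs : 0 < s := hn.trans_le hns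
  obtain h | h := le_total (n ^ 2 * E) (p * n ^ 3)
  · have hXn : X ≤ 2 ^ 24 * n ^ 3 := le_of_mul_le_mul_left (by linarith) hp
    left
    calc E ^ 6 ≤ 2 ^ 90 * n ^ 2 * l ^ 3 * s ^ 4 * (2 ^ 24 * n ^ 3) ^ 2 := by grw [hE, hXn]
      _ = _ := by ring
  · have hXE : p * X ≤ 2 ^ 24 * (n ^ 2 * E) := by linarith
    have hpE : (p * E) ^ 2 * E ^ 2 ≤ 2 ^ 138 * n ^ 6 * l ^ 3 * s ^ 4 := by
      refine le_of_mul_le_mul_right ?_ (pow_pos hE0 2)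
      calc (p * E) ^ 2 * E ^ 2 * E ^ 2 = p ^ 2 * E ^ 6 := by ring
        _ ≤ p ^ 2 * (2 ^ 90 * n ^ 2 * l ^ 3 * s ^ 4 * X ^ 2) := by gcongr
        _ = 2 ^ 90 * n ^ 2 * l ^ 3 * s ^ 4 * (p * X) ^ 2 := by ring
        _ ≤ 2 ^ 90 * n ^ 2 * l ^ 3 * s ^ 4 * (2 ^ 24 * (n ^ 2 * E)) ^ 2 := by gcongr
        _ = _ := by ring
    obtain hsmall | hlarge := le_total (E ^ 2) (n ^ 4 * l)
    · left
      calc E ^ 6 = (E ^ 2) ^ 3 := by ring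
        _ ≤ (n ^ 4 * l) ^ 3 := by gcongr
        _ = 1 * n ^ 8 * n ^ 4 * l ^ 3 := by ring
        _ ≤ _ := by gcongr; norm_num
    · right
      refine (pow_le_pow_iff_left₀ (by positivity) (by positivity) two_ne_zero).1 ?_
      refine le_of_mul_le_mul_right ?_ (show 0 < n ^ 4 * l by positivity)
      calc (p * E) ^ 2 * (n ^ 4 * l) ≤ (p * E) ^ 2 * E ^ 2 := by gcongr
        _ ≤ 2 ^ 138 * n ^ 6 * l ^ 3 * s ^ 4 := hpE
        _ = _ := by ring

theorem mul_le_of_poor {p n s l θ E C : ℝ} (hp : 0 < p) (hn : 0 < n) (hl : 1 ≤ l) (hC : 0 ≤ C)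
    (hθ0 : 0 ≤ θ) (hθ : p * θ ≤ 81 * (p + 4 * n ^ 2)) (hθn : (θ * n) ^ 2 ≤ 2 ^ 18 * (1 + C) * n ^ 3)
    (hE : n ^ 4 * E ≤ 16 * ((θ * n) ^ 2 + 2 ^ 19 * n ^ 3 * l) * (θ * s ^ 2)) :
    p * (n * E) ≤ 2 ^ 33 * (1 + C) * l * (p + n ^ 2) * s ^ 2 := by
  have hmain : (θ * n) ^ 2 + 2 ^ 19 * n ^ 3 * l ≤ 2 ^ 20 * (1 + C) * n ^ 3 * l :=
    calc _ ≤ 2 ^ 18 * (1 + C) * n ^ 3 * l + 2 ^ 19 * (1 + C) * n ^ 3 * l := by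
          gcongr
          · exact hθn.trans (le_mul_of_one_le_right (by positivity) hl)
          · nlinarith [show 0 ≤ n ^ 3 by positivity]
      _ ≤ _ := by
          have : 0 ≤ (1 + C) * n ^ 3 * l := by positivity
          linarith
  refine le_of_mul_le_mul_left ?_ (pow_pos hn 3)
  calc n ^ 3 * (p * (n * E)) = p * (n ^ 4 * E) := by ring
    _ ≤ p * (16 * (2 ^ 20 * (1 + C) * n ^ 3 * l) * (θ * s ^ 2)) := by grw [hE, hmain]
    _ = 2 ^ 24 * (1 + C) * n ^ 3 * l * s ^ 2 * (p * θ) := by ring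
    _ ≤ 2 ^ 24 * (1 + C) * n ^ 3 * l * s ^ 2 * (81 * (p + 4 * n ^ 2)) := by gcongr
    _ ≤ 2 ^ 24 * (1 + C) * n ^ 3 * l * s ^ 2 * (2 ^ 9 * (p + n ^ 2)) := by
        gcongr ?_ * ?_
        linarith [sq_nonneg n]
    _ = _ := by ring

theorem pow_six_le_or_mul_le_of_poor {p n s l E X K : ℝ} (hp : 0 < p) (hn : 0 < n) (hl : 1 ≤ l)
    (hE0 : 0 < E) (hEn : E ≤ n ^ 3) (hX : p * X ≤ 2 ^ 23 * (p * n ^ 3 + n ^ 2 * E))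
    (hEX : E ^ 2 ≤ 2 * n ^ 2 * X) (hK : 0 ≤ K) (hE : p * (n * E) ≤ K * l * (p + n ^ 2) * s ^ 2) :
    E ^ 6 ≤ 2 ^ 52 * K ^ 2 * n ^ 8 * s ^ 4 * l ^ 3 ∨ p * E ≤ 2 * K * n * s ^ 2 * l := by
  have : 0 < l := by linarith
  obtain h | h := le_total (n ^ 2) p
  · have hXn : X ≤ 2 ^ 24 * n ^ 3 := by
      have : n ^ 2 * E ≤ p * n ^ 3 := by gcongr
      exact le_of_mul_le_mul_left (by linarith) hp
    have hEn2 : E ^ 2 ≤ 2 ^ 25 * n ^ 5 := by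
      grw [hEX, hXn]
      exact le_of_eq (by ring)
    have hnE : n * E ≤ 2 * K * l * s ^ 2 := by
      refine le_of_mul_le_mul_left (hE.trans ?_) hp
      calc K * l * (p + n ^ 2) * s ^ 2 ≤ K * l * (p + p) * s ^ 2 := by gcongr
        _ = _ := by ring
    left
    refine le_of_mul_le_mul_left ?_ (pow_pos hn 2)
    calc n ^ 2 * E ^ 6 = (E ^ 2) ^ 2 * (n * E) ^ 2 := by ring
      _ ≤ (2 ^ 25 * n ^ 5) ^ 2 * (2 * K * l * s ^ 2) ^ 2 := by gcongr
      _ = n ^ 2 * (2 ^ 52 * K ^ 2 * n ^ 8 * s ^ 4 * l ^ 2) := by ring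
      _ ≤ _ := by
          gcongr
          norm_num
  · right
    refine le_of_mul_le_mul_left ?_ hn
    calc n * (p * E) = p * (n * E) := by ring
      _ ≤ K * l * (n ^ 2 + n ^ 2) * s ^ 2 := by grw [hE, h]
      _ = _ := by ring

theorem pow_six_le_of_le_eight_mul_sq {n s l E K : ℝ} (hE0 : 0 ≤ E) (hn : 0 ≤ n) (hns : n ≤ s)
    (hl : 1 ≤ l) (hK : 1 ≤ K) (hE : E ≤ 8 * n ^ 2) :
    E ^ 6 ≤ 2 ^ 138 * K * n ^ 8 * s ^ 4 * l ^ 3 :=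
  calc E ^ 6 ≤ (8 * n ^ 2) ^ 6 := by gcongr
    _ = 2 ^ 18 * 1 * n ^ 8 * n ^ 4 * 1 := by ring
    _ ≤ _ := by
        gcongr
        · norm_num
        · norm_num
        · exact one_le_pow₀ hl

theorem natCast_le_of_pow_three_le {p n : ℕ} {C : ℝ} (hp0 : (0 : ℝ) < p)
    (hp : p ^ 3 ≤ 16 * (2 * n) ^ 4) (hnp : (n : ℝ) ^ 3 ≤ C * p ^ 2) : p ≤ 2 ^ 24 * C ^ 4 := by
  have hp' : (p : ℝ) ^ 3 ≤ 16 * (2 * n) ^ 4 := mod_cast hp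
  refine le_of_mul_le_mul_right ?_ (pow_pos hp0 8)
  calc (p : ℝ) * p ^ 8 = (p ^ 3) ^ 3 := by ring
    _ ≤ (16 * (2 * (n : ℝ)) ^ 4) ^ 3 := by gcongr
    _ = 2 ^ 24 * ((n : ℝ) ^ 3) ^ 4 := by ring
    _ ≤ 2 ^ 24 * (C * p ^ 2) ^ 4 := by gcongr
    _ = _ := by ring

namespace IsMulSubgroup

theorem addEnergy_pow_six_le_or_mul_addEnergy_le_of_eight_mul_sq_le [CharP F p]
    (hA : IsMulSubgroup A) (hn : 2 ≤ #A) (hp : 16 * (2 * #A) ^ 4 ≤ p ^ 3)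
    (hE : 8 * #A ^ 2 ≤ addEnergy A A) {C : ℝ} (hC : 0 ≤ C) (hnp : (#A : ℝ) ^ 3 ≤ C * p ^ 2) :
    (addEnergy A A : ℝ) ^ 6 ≤
        2 ^ 138 * (1 + C) ^ 2 * #A ^ 8 * #(A + A) ^ 4 * (1 + Real.log #A) ^ 3 ∨
      (p * addEnergy A A : ℝ) ≤ 2 ^ 69 * (1 + C) * #A * #(A + A) ^ 2 * (1 + Real.log #A) := by
  have hne : A.Nonempty := ⟨1, hA.one_mem⟩
  have hn0 : (0 : ℝ) < #A := Nat.cast_pos.2 hA.card_pos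
  have hp0 : 0 < p := by
    by_contra! h
    rw [Nat.le_zero.1 h, zero_pow three_ne_zero, Nat.le_zero] at hp
    exact absurd hp (by have := hA.card_pos; positivity)
  have hpR : (0 : ℝ) < p := Nat.cast_pos.2 hp0
  have hE0 : (0 : ℝ) < addEnergy A A := Nat.cast_pos.2 (addEnergy_self_pos hne)
  have := Real.log_natCast_nonneg #A
  have hl : 1 ≤ 1 + Real.log #A := by linarith
  have hns : (#A : ℝ) ≤ #(A + A) := mod_cast card_le_card_add_self
  have hC1 : 1 ≤ 1 + C := by linarith
  obtain ⟨M, hM, hME, hpM⟩ := exists_cutoff p hne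
  obtain hrich | hpoor := hA.addEnergy_pow_six_le_or_le hn hp hM hE hME
  · refine (pow_six_le_or_mul_le_of_rich hpR hn0 hns (by linarith) hE0 (by positivity) hpM
      hrich).imp (fun h ↦ h.trans ?_) fun h ↦ h.trans ?_
    · gcongr
      exact le_mul_of_one_le_right (by norm_num) (one_le_pow₀ hC1)
    · gcongr
      exact le_mul_of_one_le_right (by norm_num) hC1
  · have hEM : (addEnergy A A : ℝ) ^ 2 ≤ 2 * #A ^ 2 * (M * addEnergy A A) := by
      grw [sq, ← mul_assoc, ← hA.addEnergy_le_two_mul_card_sq_mul hn hp hM hE hME]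
    refine (pow_six_le_or_mul_le_of_poor hpR hn0 hl hE0
      (mod_cast addEnergy_le_card_pow_three A) hpM hEM (by positivity)
      (mul_le_of_poor hpR hn0 hl hC (richThreshold_pos p _).le (mul_richThreshold_le p _)
        (richThreshold_mul_sq_le hp0 hA.card_pos hC hnp) hpoor)).imp
      (fun h ↦ h.trans ?_) fun h ↦ h.trans ?_
    · rw [mul_pow, ← pow_mul, ← mul_assoc, ← pow_add]
      gcongr <;> norm_num
    · rw [← mul_assoc, ← pow_succ']
      gcongr <;> norm_num

theorem addEnergy_pow_six_le_or_mul_addEnergy_le [CharP F p] (hA : IsMulSubgroup A) {C : ℝ}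
    (hnp : (#A : ℝ) ^ 3 ≤ C * p ^ 2) :
    (addEnergy A A : ℝ) ^ 6 ≤
        2 ^ 138 * (1 + C) ^ 4 * #A ^ 8 * #(A + A) ^ 4 * (1 + Real.log #A) ^ 3 ∨
      (p * addEnergy A A : ℝ) ≤ 2 ^ 69 * (1 + C) ^ 4 * #A * #(A + A) ^ 2 * (1 + Real.log #A) := by
  have hn0 : (0 : ℝ) < #A := Nat.cast_pos.2 hA.card_pos
  have hCp : 0 < C * p ^ 2 := (pow_pos hn0 3).trans_le hnp
  have hC : 0 < C := pos_of_mul_pos_left hCp (by positivity)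
  have hp0 : (0 : ℝ) < p := by
    refine (Nat.cast_nonneg p).lt_of_ne fun h ↦ ?_
    rw [← h] at hCp
    norm_num at hCp
  have := Real.log_natCast_nonneg #A
  have hl : 1 ≤ 1 + Real.log #A := by linarith
  have hns : (#A : ℝ) ≤ #(A + A) := mod_cast card_le_card_add_self
  have hC1 : 1 ≤ 1 + C := by linarith
  have hEn : addEnergy A A ≤ #A ^ 3 := addEnergy_le_card_pow_three A
  obtain hE | hE := le_total (addEnergy A A) (8 * #A ^ 2)
  · left
    exact pow_six_le_of_le_eight_mul_sq (Nat.cast_nonneg _) hn0.le hns hl (one_le_pow₀ hC1)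
      (mod_cast hE)
  have hn : 2 ≤ #A := by
    have : 8 * #A ^ 2 ≤ #A * #A ^ 2 := (hE.trans hEn).trans_eq (pow_succ' _ _)
    linarith [le_of_mul_le_mul_right this (by have := hA.card_pos; positivity)]
  obtain hp | hp := le_total (16 * (2 * #A) ^ 4) (p ^ 3)
  · refine (hA.addEnergy_pow_six_le_or_mul_addEnergy_le_of_eight_mul_sq_le hn hp hE hC.le hnp).imp
      (fun h ↦ h.trans ?_) fun h ↦ h.trans ?_
    · gcongr
      norm_num
    · gcongr
      exact le_self_pow₀ hC1 (by norm_num)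
  · have hpC := natCast_le_of_pow_three_le hp0 hp hnp
    right
    calc (p * addEnergy A A : ℝ) ≤ 2 ^ 24 * C ^ 4 * #A ^ 3 := by gcongr; exact_mod_cast hEn
      _ = 2 ^ 24 * C ^ 4 * #A * #A ^ 2 * 1 := by ring
      _ ≤ _ := by
          gcongr
          · norm_num
          · norm_num
          · exact le_add_of_nonneg_left zero_le_one

end IsMulSubgroup

end EnergyBound

section Sumset

theorem mul_threshold_rpow_mul_rpow {n x y c : ℝ} (hx : 0 ≤ x) (hy : 0 ≤ y) (hc : 0 ≤ c) :
    n * ((c * x ^ ((5 : ℝ) / 9) * y ^ (-(1 : ℝ) / 18)) ^ ((3 : ℝ) / 5) * y ^ (-(3 : ℝ) / 10)) =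
      c ^ ((3 : ℝ) / 5) * (n * (x ^ ((1 : ℝ) / 3) * y ^ (-(1 : ℝ) / 3))) := by
  have hexp : (y ^ (-(1 : ℝ) / 18)) ^ ((3 : ℝ) / 5) * y ^ (-(3 : ℝ) / 10) = y ^ (-(1 : ℝ) / 3) := by
    rw [← Real.rpow_mul hy, ← Real.rpow_add' hy (by norm_num)]
    norm_num
  rw [Real.mul_rpow (by positivity) (by positivity), Real.mul_rpow hc (by positivity), mul_assoc,
    hexp, ← Real.rpow_mul hx]
  norm_num
  ring

theorem rpow_eight_fifths {n : ℝ} (hn : 0 ≤ n) : n ^ ((8 : ℝ) / 5) = n * n ^ ((3 : ℝ) / 5) := by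
  rw [← Real.rpow_one_add' hn (by norm_num)]
  norm_num

theorem rpow_mul_rpow_le_of_le_threshold {n x y c : ℝ} (hn : 0 ≤ n) (hx : 0 ≤ x) (hy : 0 ≤ y)
    (hc : 0 ≤ c) (h : n ≤ c * x ^ ((5 : ℝ) / 9) * y ^ (-(1 : ℝ) / 18)) :
    n ^ ((8 : ℝ) / 5) * y ^ (-(3 : ℝ) / 10) ≤
      c ^ ((3 : ℝ) / 5) * (n * (x ^ ((1 : ℝ) / 3) * y ^ (-(1 : ℝ) / 3))) := by
  rw [← mul_threshold_rpow_mul_rpow hx hy hc, rpow_eight_fifths hn, mul_assoc n]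
  gcongr

theorem mul_rpow_mul_rpow_le_of_threshold_le {n x y c : ℝ} (hn : 0 ≤ n) (hx : 0 ≤ x) (hy : 0 ≤ y)
    (hc : 0 ≤ c) (h : c * x ^ ((5 : ℝ) / 9) * y ^ (-(1 : ℝ) / 18) ≤ n) :
    c ^ ((3 : ℝ) / 5) * (n * (x ^ ((1 : ℝ) / 3) * y ^ (-(1 : ℝ) / 3))) ≤
      n ^ ((8 : ℝ) / 5) * y ^ (-(3 : ℝ) / 10) := by
  rw [← mul_threshold_rpow_mul_rpow hx hy hc, rpow_eight_fifths hn, mul_assoc n]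
  gcongr

theorem rpow_mul_log_rpow_le {n s L K : ℝ} (hn : 0 ≤ n) (hs : 0 ≤ s) (hL : 0 < L) (hK : 1 ≤ K)
    (h : n ^ 16 ≤ K * s ^ 10 * L ^ 3) : n ^ ((8 : ℝ) / 5) * L ^ (-(3 : ℝ) / 10) ≤ K * s := by
  have hnpow : (n ^ ((8 : ℝ) / 5)) ^ 10 = n ^ 16 := by
    rw [← Real.rpow_mul_natCast hn]
    norm_num
  have hLpow : (L ^ (-(3 : ℝ) / 10)) ^ 10 = (L ^ 3)⁻¹ := by
    rw [← Real.rpow_mul_natCast hL.le, ← Real.rpow_natCast L 3, ← Real.rpow_neg hL.le]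
    norm_num
  refine (pow_le_pow_iff_left₀ (by positivity) (by positivity) (show 10 ≠ 0 by norm_num)).1 ?_
  rw [mul_pow, hnpow, hLpow, mul_inv_le_iff₀ (pow_pos hL 3), mul_pow]
  grw [h, ← le_self_pow₀ hK (show 10 ≠ 0 by norm_num)]

theorem mul_rpow_mul_log_rpow_le {n s p L K : ℝ} (hn : 0 ≤ n) (hs : 0 ≤ s) (hp : 0 ≤ p)
    (hL : 0 < L) (hK : 1 ≤ K) (h : p * n ^ 3 ≤ K * s ^ 3 * L) :
    n * (p ^ ((1 : ℝ) / 3) * L ^ (-(1 : ℝ) / 3)) ≤ K * s := by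
  have hppow : (p ^ ((1 : ℝ) / 3)) ^ 3 = p := by
    rw [← Real.rpow_mul_natCast hp]
    norm_num
  have hLpow : (L ^ (-(1 : ℝ) / 3)) ^ 3 = L⁻¹ := by
    rw [← Real.rpow_mul_natCast hL.le, ← Real.rpow_neg_one]
    norm_num
  refine (pow_le_pow_iff_left₀ (by positivity) (by positivity) three_ne_zero).1 ?_
  rw [mul_pow, mul_pow, hppow, hLpow, ← mul_assoc, mul_inv_le_iff₀ hL, mul_comm, mul_pow]
  grw [h, ← le_self_pow₀ hK three_ne_zero]

namespace IsMulSubgroup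

variable {F : Type*} [Field F] [DecidableEq F] {p : ℕ} [CharP F p] {A : Finset F} {C : ℝ}

theorem card_pow_le_or_mul_card_pow_le (hA : IsMulSubgroup A) (hnp : (#A : ℝ) ^ 3 ≤ C * p ^ 2) :
    (#A : ℝ) ^ 16 ≤ 2 ^ 138 * (1 + C) ^ 4 * #(A + A) ^ 10 * (1 + Real.log #A) ^ 3 ∨
      (p * #A ^ 3 : ℝ) ≤ 2 ^ 69 * (1 + C) ^ 4 * #(A + A) ^ 3 * (1 + Real.log #A) := by
  have hn0 : (0 : ℝ) < #A := Nat.cast_pos.2 hA.card_pos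
  have hcs : (#A : ℝ) ^ 4 ≤ #(A + A) * addEnergy A A := by
    have := le_card_add_mul_addEnergy A A
    rw [← pow_add] at this
    exact_mod_cast this
  refine (hA.addEnergy_pow_six_le_or_mul_addEnergy_le hnp).imp (fun h ↦ ?_) fun h ↦ ?_
  · refine le_of_mul_le_mul_left ?_ (pow_pos hn0 8)
    calc (#A : ℝ) ^ 8 * #A ^ 16 = ((#A : ℝ) ^ 4) ^ 6 := by ring
      _ ≤ (#(A + A) * addEnergy A A : ℝ) ^ 6 := by gcongr
      _ = (#(A + A) : ℝ) ^ 6 * addEnergy A A ^ 6 := mul_pow _ _ _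
      _ ≤ #(A + A) ^ 6 * (2 ^ 138 * (1 + C) ^ 4 * #A ^ 8 * #(A + A) ^ 4 *
            (1 + Real.log #A) ^ 3) := by gcongr
      _ = _ := by ring
  · refine le_of_mul_le_mul_left ?_ hn0
    calc (#A : ℝ) * (p * #A ^ 3) = p * (#A : ℝ) ^ 4 := by ring
      _ ≤ p * (#(A + A) * addEnergy A A : ℝ) := by gcongr
      _ = #(A + A) * (p * addEnergy A A : ℝ) := by ring
      _ ≤ #(A + A) * (2 ^ 69 * (1 + C) ^ 4 * #A * #(A + A) ^ 2 * (1 + Real.log #A)) := by gcongr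
      _ = _ := by ring

theorem rpow_mul_log_rpow_le_card_add_or (hA : IsMulSubgroup A) (hC : 0 ≤ C)
    (hnp : (#A : ℝ) ^ 3 ≤ C * p ^ 2) :
    #A ^ ((8 : ℝ) / 5) * Real.log #A ^ (-(3 : ℝ) / 10) ≤ 2 ^ 143 * (1 + C) ^ 4 * #(A + A) ∨
      #A * (p ^ ((1 : ℝ) / 3) * Real.log #A ^ (-(1 : ℝ) / 3)) ≤
        2 ^ 143 * (1 + C) ^ 4 * #(A + A) := by
  obtain hA1 | hA2 := (show 1 ≤ #A from hA.card_pos).eq_or_lt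
  · left
    rw [← hA1, Nat.cast_one, Real.log_one, Real.zero_rpow (by norm_num), mul_zero]
    positivity
  have hL : 1 / 2 ≤ Real.log #A :=
    (show (1 : ℝ) / 2 ≤ Real.log 2 by linarith [Real.log_two_gt_d9]).trans
      (Real.log_le_log two_pos (mod_cast hA2))
  have hL0 : 0 < Real.log #A := by linarith
  have hl : 1 + Real.log #A ≤ 3 * Real.log #A := by linarith
  have hK : 1 ≤ 2 ^ 143 * (1 + C) ^ 4 :=
    one_le_mul_of_one_le_of_one_le (by norm_num) (one_le_pow₀ (by linarith))
  refine (hA.card_pow_le_or_mul_card_pow_le hnp).imp (fun h ↦ ?_) fun h ↦ ?_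
  · refine rpow_mul_log_rpow_le (by positivity) (by positivity) hL0 hK (h.trans ?_)
    calc _ ≤ 2 ^ 138 * (1 + C) ^ 4 * #(A + A) ^ 10 * (3 * Real.log #A) ^ 3 := by grw [hl]
      _ = 27 * 2 ^ 138 * ((1 + C) ^ 4 * #(A + A) ^ 10 * Real.log #A ^ 3) := by ring
      _ ≤ 2 ^ 143 * ((1 + C) ^ 4 * #(A + A) ^ 10 * Real.log #A ^ 3) :=
          mul_le_mul_of_nonneg_right (by norm_num) (by positivity)
      _ = _ := by ring
  · refine mul_rpow_mul_log_rpow_le (by positivity) (by positivity) (by positivity) hL0 hK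
      (h.trans ?_)
    calc _ ≤ 2 ^ 69 * (1 + C) ^ 4 * #(A + A) ^ 3 * (3 * Real.log #A) := by grw [hl]
      _ = 3 * 2 ^ 69 * ((1 + C) ^ 4 * #(A + A) ^ 3 * Real.log #A) := by ring
      _ ≤ 2 ^ 143 * ((1 + C) ^ 4 * #(A + A) ^ 3 * Real.log #A) :=
          mul_le_mul_of_nonneg_right (by norm_num) (by positivity)
      _ = _ := by ring

end IsMulSubgroup

end Sumset

theorem stmt6_general.{u} {C₀ c : ℝ} (hC₀ : 0 < C₀) (hc : 0 < c) :
    ∃ C₁ C₂ : ℝ, 0 < C₁ ∧ 0 < C₂ ∧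
      ∀ (p : ℕ) (F : Type u) [Field F] [DecidableEq F] [CharP F p] (A : Finset F),
        IsMulSubgroup A → (#A : ℝ) ≤ C₀ * (p : ℝ) ^ ((2 : ℝ) / 3) →
          ((#A : ℝ) ≤ c * (p : ℝ) ^ ((5 : ℝ) / 9) * Real.log #A ^ (-(1 : ℝ) / 18) →
            (#(A + A) : ℝ) ≥
              C₁ * (#A : ℝ) ^ ((8 : ℝ) / 5) * Real.log #A ^ (-(3 : ℝ) / 10)) ∧
          ((#A : ℝ) ≥ c * (p : ℝ) ^ ((5 : ℝ) / 9) * Real.log #A ^ (-(1 : ℝ) / 18) →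
            (#(A + A) : ℝ) ≥
              C₂ * (#A : ℝ) * (p : ℝ) ^ ((1 : ℝ) / 3) * Real.log #A ^ (-(1 : ℝ) / 3)) := by
  set D : ℝ := 2 ^ 143 * (1 + C₀ ^ 3) ^ 4
  set b : ℝ := c ^ ((3 : ℝ) / 5)
  have hD : 0 < D := by positivity
  have hb : 0 < b := Real.rpow_pos_of_pos hc _
  refine ⟨(D * (1 + b))⁻¹, (D * (1 + b⁻¹))⁻¹, by positivity, by positivity,
    fun p F _ _ _ A hA hnp ↦ ?_⟩
  have hn : (0 : ℝ) ≤ #A := Nat.cast_nonneg _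
  have hlog : 0 ≤ Real.log #A := Real.log_natCast_nonneg _
  have hs : 0 ≤ D * #(A + A) := mul_nonneg hD.le (Nat.cast_nonneg _)
  have hnp3 : (#A : ℝ) ^ 3 ≤ C₀ ^ 3 * p ^ 2 := by
    grw [hnp, mul_pow, ← Real.rpow_mul_natCast p.cast_nonneg]
    norm_num
  have hor := hA.rpow_mul_log_rpow_le_card_add_or (by positivity) hnp3
  constructor <;> intro h
  · have huv := rpow_mul_rpow_le_of_le_threshold hn p.cast_nonneg hlog hc.le h
    rw [ge_iff_le, mul_assoc, inv_mul_le_iff₀ (by positivity)]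
    obtain hu | hv := hor
    · linarith [mul_nonneg hb.le hs]
    · linarith [mul_le_mul_of_nonneg_left hv hb.le]
  · have hvu := mul_rpow_mul_rpow_le_of_threshold_le hn p.cast_nonneg hlog hc.le h
    rw [ge_iff_le, mul_assoc, mul_assoc, inv_mul_le_iff₀ (by positivity)]
    obtain hu | hv := hor
    · linarith [(le_inv_mul_iff₀ hb).2 (hvu.trans hu)]
    · linarith [mul_nonneg (inv_nonneg.2 hb.le) hs]

theorem stmt6 :
    ∀ C₀ : ℝ, 0 < C₀ → ∃ c C₁ C₂ : ℝ, 0 < c ∧ 0 < C₁ ∧ 0 < C₂ ∧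
      ∀ (p : ℕ) [NeZero p], p.Prime →
        ∀ A : Finset (ZMod p), mulSubgroup p A →
          (A.card : ℝ) ≤ C₀ * (p : ℝ) ^ ((2 : ℝ) / 3) →
          ((A.card : ℝ) ≤ c * (p : ℝ) ^ ((5 : ℝ) / 9) * Real.log A.card ^ (-(1 : ℝ) / 18) →
            ((A + A).card : ℝ) ≥
              C₁ * (A.card : ℝ) ^ ((8 : ℝ) / 5) * Real.log A.card ^ (-(3 : ℝ) / 10)) ∧
          ((A.card : ℝ) ≥ c * (p : ℝ) ^ ((5 : ℝ) / 9) * Real.log A.card ^ (-(1 : ℝ) / 18) →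
            ((A + A).card : ℝ) ≥
              C₂ * (A.card : ℝ) * (p : ℝ) ^ ((1 : ℝ) / 3) * Real.log A.card ^ (-(1 : ℝ) / 3)) := by
  intro C₀ hC₀
  obtain ⟨C₁, C₂, hC₁, hC₂, h⟩ := stmt6_general hC₀ one_pos
  refine ⟨1, C₁, C₂, one_pos, hC₁, hC₂, fun p _ hp A ⟨h0, h1, hmul, hinv⟩ hA ↦ ?_⟩
  have := Fact.mk hp
  exact h p (ZMod p) A ⟨h0, h1, hmul, hinv⟩ hA
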